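/- arXiv:1408.0846 — 2 statements merged into one kernel-verified Lean document; each statement's English description precedes it below -/
import Mathlib

section
/- Let k ≥ 4. Every k-Ore graph G is k-critical, satisfies 2(k−1)|E(G)| = (k+1)(k−2)|V(G)| − k(k−3), and has |V(G)| ≡ 1 (mod k−1). -/
open SimpleGraph

section Defs

variable {V : Type*}

instance instDecidableInduceAdj (G : SimpleGraph V) [DecidableRel G.Adj] (s : Set V) :
    DecidableRel (G.induce s).Adj := fun a b => ‹DecidableRel G.Adj› a.1 b.1

instance instDecidableDeleteEdgeAdj [DecidableEq V] (G : SimpleGraph V) [DecidableRel G.Adj]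
    (e : Sym2 V) : DecidableRel (G.deleteEdges {e}).Adj := fun a b =>
  decidable_of_iff (G.Adj a b ∧ ¬s(a, b) = e) (by simp)

/-- The `k`-potential of a vertex subset `R` of a graph `G`:
`ρ_{k,G}(R) = (k+1)(k-2)|R| - 2(k-1)|E(G[R])|`, where `G[R]` is the induced subgraph. -/
def potential (k : ℕ) (G : SimpleGraph V) [Fintype V] [DecidableEq V] [DecidableRel G.Adj]
    (R : Finset V) : ℤ :=
  ((k : ℤ) + 1) * ((k : ℤ) - 2) * R.card
    - 2 * ((k : ℤ) - 1) * ((G.induce (R : Set V)).edgeFinset.card)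

/-- A graph is `k`-critical if its chromatic number is `k` and every proper subgraph is
`(k-1)`-colorable. -/
def IsKCritical (k : ℕ) (G : SimpleGraph V) : Prop :=
  G.chromaticNumber = k ∧ ∀ H : SimpleGraph V, H < G → H.Colorable (k - 1)

/-- The graph underlying the DHGO-composition: delete the edge `xy` from `G₁`, split the vertex
`z` of `G₂` into two vertices, identify `x` with the half of `z` joined to the neighbors of `z`
lying in `P` and identify `y` with the half joined to the remaining neighbors of `z`. -/
def dhgoGraph {V₁ V₂ : Type*} (G₁ : SimpleGraph V₁) (G₂ : SimpleGraph V₂)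
    (x y : V₁) (z : V₂) (P : Set V₂) :
    SimpleGraph (V₁ ⊕ {w : V₂ // w ≠ z}) :=
  SimpleGraph.fromRel (fun a b =>
    match a, b with
    | Sum.inl a, Sum.inl b => G₁.Adj a b ∧ s(a, b) ≠ s(x, y)
    | Sum.inl a, Sum.inr b => (a = x ∧ (b : V₂) ∈ P) ∨ (a = y ∧ (b : V₂) ∈ G₂.neighborSet z \ P)
    | Sum.inr a, Sum.inr b => G₂.Adj a b
    | _, _ => False)

/-- `G` is a DHGO-composition of `G₁` and `G₂`: some edge `xy` of `G₁` is deleted, some vertex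
`z` of `G₂` is split into two vertices of positive degree (its neighborhood is partitioned into
two nonempty parts `P` and `N(z) \ P`), and `x`, `y` are identified with the two halves of `z`. -/
def IsDHGO {V₁ V₂ U : Type*} (G : SimpleGraph U) (G₁ : SimpleGraph V₁) (G₂ : SimpleGraph V₂) :
    Prop :=
  ∃ (x y : V₁) (z : V₂) (P : Set V₂),
    G₁.Adj x y ∧ P ⊆ G₂.neighborSet z ∧ P.Nonempty ∧ (G₂.neighborSet z \ P).Nonempty ∧
    Nonempty (G ≃g dhgoGraph G₁ G₂ x y z P)

/-- `k`-Ore graphs on the canonical finite vertex types `Fin n`: graphs obtained from copies of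
`K_k` by a sequence of DHGO-compositions. -/
inductive IsOreFin (k : ℕ) : ∀ {n : ℕ}, SimpleGraph (Fin n) → Prop
  | complete {n : ℕ} {G : SimpleGraph (Fin n)}
      (h : Nonempty (G ≃g (⊤ : SimpleGraph (Fin k)))) : IsOreFin k G
  | comp {n₁ n₂ n : ℕ} {G₁ : SimpleGraph (Fin n₁)} {G₂ : SimpleGraph (Fin n₂)}
      {G : SimpleGraph (Fin n)} (h₁ : IsOreFin k G₁) (h₂ : IsOreFin k G₂)
      (h : IsDHGO G G₁ G₂) : IsOreFin k G

/-- A graph is a `k`-Ore graph if it is obtained from copies of `K_k` by a sequence of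
DHGO-compositions. -/
def IsKOre (k : ℕ) {V : Type*} (G : SimpleGraph V) : Prop :=
  ∃ (n : ℕ) (H : SimpleGraph (Fin n)), IsOreFin k H ∧ Nonempty (G ≃g H)

/-- `y_k = max {2k - 6, k² - 5k + 2}`. -/
def yk (k : ℕ) : ℤ := max (2 * (k : ℤ) - 6) ((k : ℤ) ^ 2 - 5 * (k : ℤ) + 2)

/-- A `k`-critical graph is `k`-extremal if `2(k-1)|E(G)| = (k+1)(k-2)|V(G)| - k(k-3)`. -/
def IsKExtremal (k : ℕ) {V : Type*} [Fintype V] [DecidableEq V] (G : SimpleGraph V)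
    [DecidableRel G.Adj] : Prop :=
  IsKCritical k G ∧
    2 * ((k : ℤ) - 1) * G.edgeFinset.card =
      ((k : ℤ) + 1) * ((k : ℤ) - 2) * Fintype.card V - (k : ℤ) * ((k : ℤ) - 3)

/-- A graph is 3-connected if it has more than 3 vertices and deleting any set of at most 2
vertices leaves it connected. -/
def IsThreeConnected {V : Type*} [Fintype V] (G : SimpleGraph V) : Prop :=
  3 < Fintype.card V ∧ ∀ s : Set V, s.ncard ≤ 2 → (G.induce sᶜ).Connected

/-- `Q` is a `k`-quasi-`xy`-vertex: `G[Q]` is `(k-1)`-colorable, every proper `(k-1)`-coloring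
of `G[Q]` gives `x` and `y` the same color, and for every edge `e` of `G[Q]` the graph
`G[Q] - e` has a proper `(k-1)`-coloring giving `x` and `y` different colors. -/
def IsQuasiVertex (k : ℕ) {V : Type*} [DecidableEq V] (G : SimpleGraph V) (x y : V)
    (Q : Set V) : Prop :=
  ∃ (hx : x ∈ Q) (hy : y ∈ Q),
    (G.induce Q).Colorable (k - 1) ∧
    (∀ C : (G.induce Q).Coloring (Fin (k - 1)), C ⟨x, hx⟩ = C ⟨y, hy⟩) ∧
    (∀ a b : Q, (G.induce Q).Adj a b →
      ∃ C : ((G.induce Q).deleteEdges {s(a, b)}).Coloring (Fin (k - 1)),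
        C ⟨x, hx⟩ ≠ C ⟨y, hy⟩)

/-- A set `S` of vertices is standard if `ρ_{k,G}(S) = (k+1)(k-2)`, `G` has a separating set
`{x,y} ⊆ S` such that `S - {x,y}` induces a component of `G - {x,y}`, and `S` is a
`k`-quasi-`xy`-vertex. -/
def IsStandardSet (k : ℕ) {V : Type*} [Fintype V] [DecidableEq V] (G : SimpleGraph V)
    [DecidableRel G.Adj] (S : Finset V) : Prop :=
  potential k G S = ((k : ℤ) + 1) * ((k : ℤ) - 2) ∧
  ∃ x y : V, x ≠ y ∧ x ∈ S ∧ y ∈ S ∧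
    ¬(G.induce ({x, y}ᶜ : Set V)).Connected ∧
    (G.induce ((S : Set V) \ {x, y})).Connected ∧
    (∀ a ∈ (S : Set V) \ {x, y}, ∀ b : V, G.Adj a b → b ∈ (S : Set V) ∪ {x, y}) ∧
    IsQuasiVertex k G x y (S : Set V)

end Defs

/-!
Criticality of `G₁` and `G₂` alone does not pass to a DHGO-composition by itself: to color the
composition minus an edge of `G₁`, one extends a coloring of `G₁` in which `x` and `y` get
different colors, so `G₂` must have a coloring in which the two halves of `z` are different. The
induction therefore runs on the stronger `IsSplitCritical`: after splitting a vertex into pendant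
copies, every precoloring of the copies that is not constant extends. For `K_k` this is Hall's
theorem. In a composition, one side is colored first and the colors it forces on the split
vertex `z`, or on the ends of the deleted edge `xy`, are extended to the other side.

For the counts, merging `V₁` into `z` maps the edges of the composition outside `V₁` bijectively
onto the edges of `G₂`, so `|E| = |E₁| + |E₂| - 1` and `|V| = |V₁| + |V₂| - 1`.
-/

section SplitCritical

variable {α V W : Type*} {G : SimpleGraph V} {x y : V}

/-- `G` is split-critical for the color set `α` if it has no proper coloring by `α`, deleting
any edge makes it colorable, and, whenever a vertex `v` is split into one pendant copy per
neighbor `u` and the copy at `u` is precolored by `f u`, with not all of these colors equal, the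
precoloring extends to a proper coloring. -/
structure IsSplitCritical (α : Type*) {V : Type*} (G : SimpleGraph V) : Prop where
  isEmpty_coloring : IsEmpty (G.Coloring α)
  nonempty_coloring_deleteEdges : ∀ ⦃u v : V⦄, G.Adj u v →
    Nonempty ((G.deleteEdges {s(u, v)}).Coloring α)
  exists_coloring_split : ∀ (v : V) (f : V → α), (∀ c, ∃ u, G.Adj v u ∧ f u ≠ c) →
    ∃ C : (G.deleteIncidenceSet v).Coloring α, ∀ u, G.Adj v u → C u ≠ f u

theorem IsSplitCritical.of_iso {H : SimpleGraph W} (e : G ≃g H) (hH : IsSplitCritical α H) :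
    IsSplitCritical α G where
  isEmpty_coloring := ⟨fun C => hH.isEmpty_coloring.false (C.comp e.symm.toHom)⟩
  nonempty_coloring_deleteEdges u v huv := by
    obtain ⟨C⟩ := hH.nonempty_coloring_deleteEdges (e.map_adj_iff.2 huv)
    refine ⟨.mk (C ∘ e) fun {a b} hab => C.valid ?_⟩
    simpa [deleteEdges_adj, e.map_adj_iff] using hab
  exists_coloring_split v f hf := by
    obtain ⟨C, hC⟩ := hH.exists_coloring_split (e v) (f ∘ e.symm) fun c => by
      obtain ⟨u, hvu, hu⟩ := hf c
      exact ⟨e u, e.map_adj_iff.2 hvu, by simpa using hu⟩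
    refine ⟨.mk (C ∘ e) fun {a b} hab => C.valid ?_, fun u hvu => ?_⟩
    · simpa [deleteIncidenceSet_adj, e.map_adj_iff] using hab
    · change C (e u) ≠ f u
      simpa using hC (e u) (e.map_adj_iff.2 hvu)

theorem coloring_deleteEdges_eq (hG : IsEmpty (G.Coloring α))
    (C : (G.deleteEdges {s(x, y)}).Coloring α) : C x = C y := by
  by_contra hxy
  refine hG.false (.mk C fun {a b} hab => ?_)
  by_cases he : s(a, b) = s(x, y)
  · rcases Sym2.eq_iff.1 he with ⟨rfl, rfl⟩ | ⟨rfl, rfl⟩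
    exacts [hxy, Ne.symm hxy]
  · exact C.valid (deleteEdges_adj.2 ⟨hab, he⟩)

theorem IsSplitCritical.exists_coloring_deleteEdges_eq (hG : IsSplitCritical α G)
    (hxy : G.Adj x y) (c : α) :
    ∃ C : (G.deleteEdges {s(x, y)}).Coloring α, C x = c ∧ C y = c := by
  classical
  obtain ⟨C⟩ := hG.nonempty_coloring_deleteEdges hxy
  let C' := (G.deleteEdges {s(x, y)}).recolorOfEquiv (Equiv.swap (C x) c) C
  have hx : C' x = c := Equiv.swap_apply_left _ _
  exact ⟨C', hx, (coloring_deleteEdges_eq hG.isEmpty_coloring C').symm.trans hx⟩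

theorem deleteIncidenceSet_le_deleteEdges (G : SimpleGraph V) (x y : V) :
    G.deleteIncidenceSet x ≤ G.deleteEdges {s(x, y)} := by
  intro a b hab
  rw [deleteIncidenceSet_adj] at hab
  rw [deleteEdges_adj, Set.mem_singleton_iff, Sym2.eq_iff]
  tauto

theorem IsSplitCritical.exists_coloring_split_erase (hG : IsSplitCritical α G)
    (hxy : G.Adj x y) (f : V → α) :
    ∃ C : (G.deleteIncidenceSet x).Coloring α, ∀ u, G.Adj x u → u ≠ y → C u ≠ f u := by
  by_cases hf : ∃ c, ∀ u, G.Adj x u → u ≠ y → f u = c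
  · obtain ⟨c, hc⟩ := hf
    obtain ⟨C, hCx, -⟩ := hG.exists_coloring_deleteEdges_eq hxy c
    refine ⟨C.comp (.ofLE (deleteIncidenceSet_le_deleteEdges G x y)), fun u hu huy => ?_⟩
    have hxu : (G.deleteEdges {s(x, y)}).Adj x u := by simp [hu, huy, hxy.ne]
    rw [hc u hu huy, ← hCx]
    exact (C.valid hxu).symm
  · push Not at hf
    obtain ⟨C, hC⟩ := hG.exists_coloring_split x f fun c =>
      let ⟨u, hu, _, hfu⟩ := hf c
      ⟨u, hu, hfu⟩
    exact ⟨C, fun u hu _ => hC u hu⟩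

theorem IsSplitCritical.exists_coloring_split_erase_ne {ι : Type*} [Nonempty ι]
    (hG : IsSplitCritical α G) (hxy : G.Adj x y) (f : V → α) (g : ι → α)
    (hfg : ∀ c, (∃ u, G.Adj x u ∧ u ≠ y ∧ f u ≠ c) ∨ ∃ i, g i ≠ c) :
    ∃ C : (G.deleteIncidenceSet x).Coloring α,
      (∀ u, G.Adj x u → u ≠ y → C u ≠ f u) ∧ ∃ i, g i ≠ C y := by
  classical
  by_cases hg : ∃ c, ∀ i, g i = c
  · obtain ⟨c, hc⟩ := hg
    obtain ⟨C, hC⟩ := hG.exists_coloring_split x (fun u => if u = y then c else f u) fun d => by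
      by_cases hd : c = d
      · obtain ⟨u, hu, huy, hfu⟩ | ⟨i, hi⟩ := hfg d
        · exact ⟨u, hu, by simpa [huy] using hfu⟩
        · exact absurd ((hc i).trans hd) hi
      · exact ⟨y, hxy, by simpa using hd⟩
    obtain ⟨i⟩ := ‹Nonempty ι›
    exact ⟨C, fun u hu huy => by simpa [huy] using hC u hu,
      i, by simpa [hc i] using (hC y hxy).symm⟩
  · push Not at hg
    obtain ⟨C, hC⟩ := hG.exists_coloring_split_erase hxy f
    exact ⟨C, hC, hg (C y)⟩

theorem colorable_succ_of_colorable_deleteEdges {n : ℕ}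
    (hG : (G.deleteEdges {s(x, y)}).Colorable n) : G.Colorable (n + 1) := by
  classical
  obtain ⟨C⟩ := hG
  have C' : G.Coloring (Option (Fin n)) :=
    .mk (fun u => if u = x then none else some (C u)) fun {a b} hab => by
      by_cases ha : a = x <;> by_cases hb : b = x
      · exact absurd (ha.trans hb.symm) hab.ne
      · simp [ha, hb]
      · simp [ha, hb]
      · simpa [ha, hb] using C.valid (deleteEdges_adj.2 ⟨hab, by simp [ha, hb]⟩)
  simpa using C'.colorable

theorem IsSplitCritical.isKCritical {k : ℕ} (hk : 0 < k) (hG : IsSplitCritical (Fin (k - 1)) G) :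
    IsKCritical k G := by
  obtain ⟨n, rfl⟩ : ∃ n, k = n + 1 := ⟨k - 1, by omega⟩
  refine ⟨chromaticNumber_eq_iff_colorable_not_colorable.2
    ⟨?_, not_nonempty_iff.2 hG.isEmpty_coloring⟩, fun H hH => ?_⟩
  · by_cases hbot : G = ⊥
    · exact (colorable_one_iff.2 hbot).mono (by omega)
    · obtain ⟨u, v, huv⟩ := ne_bot_iff_exists_adj.1 hbot
      exact colorable_succ_of_colorable_deleteEdges (hG.nonempty_coloring_deleteEdges huv)
  · obtain ⟨u, v, huv, hHuv⟩ : ∃ u v, G.Adj u v ∧ ¬ H.Adj u v := by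
      by_contra! hGH
      exact hH.not_ge fun a b => hGH a b
    refine Colorable.mono_left (fun a b hab => ?_) (hG.nonempty_coloring_deleteEdges huv)
    refine deleteEdges_adj.2 ⟨hH.le hab, fun he => hHuv ?_⟩
    rwa [← mem_edgeSet, ← Set.mem_singleton_iff.1 he]

end SplitCritical

section CompleteGraph

variable {α V ι : Type*} [Fintype α] [Fintype V] [Fintype ι]

/- Hall's condition: the colors allowed at a single `i` number `|α| - 1`, and only the full index
set needs all `|α|` colors, which the two values of `f` provide. -/
theorem exists_injective_forall_ne (hcard : Fintype.card ι = Fintype.card α) (f : ι → α)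
    (hf : ∀ c, ∃ i, f i ≠ c) : ∃ g : ι → α, g.Injective ∧ ∀ i, g i ≠ f i := by
  classical
  suffices hall : ∀ s : Finset ι, s.card ≤ (s.biUnion fun i => ({f i}ᶜ : Finset α)).card by
    simpa using (Finset.all_card_le_biUnion_card_iff_exists_injective _).1 hall
  intro s
  by_cases hs : (s.biUnion fun i => ({f i}ᶜ : Finset α)) = Finset.univ
  · rw [hs, Finset.card_univ, ← hcard]
    exact s.card_le_univ
  obtain ⟨c, hc⟩ : ∃ c, ∀ i ∈ s, f i = c := by
    simp only [Finset.eq_univ_iff_forall, Finset.mem_biUnion, Finset.mem_compl,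
      Finset.mem_singleton] at hs
    push Not at hs
    exact hs.imp fun c hc i hi => (hc i hi).symm
  obtain ⟨j, hj⟩ := hf c
  have hsj : s.card < Fintype.card ι := Finset.card_lt_univ_of_notMem fun hjs => hj (hc j hjs)
  rcases s.eq_empty_or_nonempty with rfl | ⟨i, hi⟩
  · simp
  calc s.card ≤ ({f i}ᶜ : Finset α).card := by rw [Finset.card_compl, Finset.card_singleton]; omega
    _ ≤ _ := Finset.card_le_card (Finset.subset_biUnion_of_mem (fun i => ({f i}ᶜ : Finset α)) hi)

theorem isSplitCritical_top (hcard : Fintype.card V = Fintype.card α + 1) :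
    IsSplitCritical α (⊤ : SimpleGraph V) where
  isEmpty_coloring := ⟨fun C => by
    obtain ⟨a, b, hab, hC⟩ := Fintype.exists_ne_map_eq_of_card_lt C (by omega)
    exact C.valid (by simpa using hab) hC⟩
  nonempty_coloring_deleteEdges u v huv := by
    classical
    have hv : Fintype.card {w // w ≠ v} = Fintype.card α := (Set.card_ne_eq v).trans (by omega)
    let e : {w // w ≠ v} ≃ α := Fintype.equivOfCardEq hv
    refine ⟨.mk (fun w => if h : w = v then e ⟨u, huv.ne⟩ else e ⟨w, h⟩) fun {a b} hab => ?_⟩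
    simp only [deleteEdges_adj, top_adj, Set.mem_singleton_iff, Sym2.eq_iff] at hab
    by_cases ha : a = v <;> by_cases hb : b = v <;>
      simp only [ha, hb, dif_pos, dif_neg, not_false_eq_true, ne_eq, e.injective.eq_iff,
        Subtype.mk.injEq] <;> grind
  exists_coloring_split v f hf := by
    classical
    have hv : Fintype.card {u // u ≠ v} = Fintype.card α := (Set.card_ne_eq v).trans (by omega)
    obtain ⟨g, hg, hgf⟩ := exists_injective_forall_ne hv (fun u => f u) fun c => by
      obtain ⟨u, hu, hfu⟩ := hf c
      exact ⟨⟨u, hu.ne'⟩, hfu⟩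
    refine ⟨.mk (fun u => if h : u = v then f v else g ⟨u, h⟩) fun {a b} hab => ?_, fun u hu => ?_⟩
    · obtain ⟨hab, ha, hb⟩ := deleteIncidenceSet_adj.1 hab
      simpa [ha, hb, hg.eq_iff] using hab.ne
    · change (if h : u = v then f v else g ⟨u, h⟩) ≠ f u
      simpa only [dif_neg hu.ne'] using hgf ⟨u, hu.ne'⟩

end CompleteGraph

section Composition

variable {α V₁ V₂ : Type*} {G₁ : SimpleGraph V₁} {G₂ : SimpleGraph V₂}
  {x y : V₁} {z : V₂} {P : Set V₂}

@[simp]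
theorem dhgoGraph_adj_inl_inl {a b : V₁} :
    (dhgoGraph G₁ G₂ x y z P).Adj (.inl a) (.inl b) ↔ G₁.Adj a b ∧ s(a, b) ≠ s(x, y) := by
  simp only [dhgoGraph, fromRel_adj, ne_eq, Sum.inl.injEq]
  rw [G₁.adj_comm b a, Sym2.eq_swap (a := b) (b := a), or_self]
  exact and_iff_right_of_imp fun h => h.1.ne

@[simp]
theorem dhgoGraph_adj_inr_inr {v w : {w : V₂ // w ≠ z}} :
    (dhgoGraph G₁ G₂ x y z P).Adj (.inr v) (.inr w) ↔ G₂.Adj v w := by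
  simp only [dhgoGraph, fromRel_adj, ne_eq, Sum.inr.injEq]
  rw [G₂.adj_comm w v, or_self]
  exact and_iff_right_of_imp fun h => ne_of_apply_ne Subtype.val h.ne

@[simp]
theorem dhgoGraph_adj_inl_inr {a : V₁} {w : {w : V₂ // w ≠ z}} :
    (dhgoGraph G₁ G₂ x y z P).Adj (.inl a) (.inr w) ↔
      a = x ∧ (w : V₂) ∈ P ∨ a = y ∧ G₂.Adj z w ∧ (w : V₂) ∉ P := by
  simp [dhgoGraph, fromRel_adj]

@[simp]
theorem dhgoGraph_adj_inr_inl {a : V₁} {w : {w : V₂ // w ≠ z}} :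
    (dhgoGraph G₁ G₂ x y z P).Adj (.inr w) (.inl a) ↔
      a = x ∧ (w : V₂) ∈ P ∨ a = y ∧ G₂.Adj z w ∧ (w : V₂) ∉ P := by
  rw [adj_comm, dhgoGraph_adj_inl_inr]

theorem dhgoGraph_swap (hP : P ⊆ G₂.neighborSet z) :
    dhgoGraph G₁ G₂ x y z P = dhgoGraph G₁ G₂ y x z (G₂.neighborSet z \ P) := by
  have hP' : ∀ w ∈ P, G₂.Adj z w := fun w hw => hP hw
  ext (a | v) (b | w)
  · simp [Sym2.eq_swap (a := x)]
  · simp only [dhgoGraph_adj_inl_inr, Set.mem_sdiff, mem_neighborSet]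
    grind
  · simp only [dhgoGraph_adj_inr_inl, Set.mem_sdiff, mem_neighborSet]
    grind
  · simp

/-- The vertex map from a DHGO-composition to `G₂` that merges all of `V₁` into the split
vertex `z`. The edges of the composition that do not lie inside `V₁` correspond under it to the
edges of `G₂`. -/
def dhgoProj (V₁ : Type*) {V₂ : Type*} (z : V₂) : V₁ ⊕ {w : V₂ // w ≠ z} → V₂ :=
  Sum.elim (fun _ => z) Subtype.val

@[simp]
theorem dhgoProj_inl (a : V₁) : dhgoProj V₁ z (.inl a) = z := rfl

@[simp]
theorem dhgoProj_inr (w : {w : V₂ // w ≠ z}) : dhgoProj V₁ z (.inr w) = w := rfl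

theorem adj_dhgoProj (hP : P ⊆ G₂.neighborSet z) {u : V₁ ⊕ {w : V₂ // w ≠ z}}
    {w : {w : V₂ // w ≠ z}} (h : (dhgoGraph G₁ G₂ x y z P).Adj u (.inr w)) :
    G₂.Adj (dhgoProj V₁ z u) w := by
  rcases u with a | v
  · rcases dhgoGraph_adj_inl_inr.1 h with ⟨-, hw⟩ | ⟨-, hw, -⟩
    exacts [hP hw, hw]
  · exact dhgoGraph_adj_inr_inr.1 h

theorem exists_adj_dhgoProj_eq (G₁ : SimpleGraph V₁) (x y : V₁) (P : Set V₂) {v : V₂}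
    {w : {w : V₂ // w ≠ z}} (h : G₂.Adj v w) :
    ∃ u, (dhgoGraph G₁ G₂ x y z P).Adj u (.inr w) ∧ dhgoProj V₁ z u = v := by
  by_cases hv : v = z
  · subst hv
    by_cases hw : (w : V₂) ∈ P
    · exact ⟨.inl x, by simp [hw], rfl⟩
    · exact ⟨.inl y, by simp [hw, h], rfl⟩
  · exact ⟨.inr ⟨v, hv⟩, by simpa using h, rfl⟩

theorem eq_of_adj_of_dhgoProj_eq {u u' : V₁ ⊕ {w : V₂ // w ≠ z}} {w : {w : V₂ // w ≠ z}}
    (h : (dhgoGraph G₁ G₂ x y z P).Adj u (.inr w)) (h' : (dhgoGraph G₁ G₂ x y z P).Adj u' (.inr w))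
    (hu : dhgoProj V₁ z u = dhgoProj V₁ z u') : u = u' := by
  rcases u with a | v <;> rcases u' with a' | v'
  · rw [dhgoGraph_adj_inl_inr] at h h'
    grind
  · exact absurd hu.symm v'.2
  · exact absurd hu v.2
  · exact congrArg _ (Subtype.ext hu)

theorem sym2_eq_of_adj_of_dhgoProj_eq {u u' : V₁ ⊕ {w : V₂ // w ≠ z}} {w w' : {w : V₂ // w ≠ z}}
    (h : (dhgoGraph G₁ G₂ x y z P).Adj u (.inr w))
    (h' : (dhgoGraph G₁ G₂ x y z P).Adj u' (.inr w'))
    (he : s(dhgoProj V₁ z u, (w : V₂)) = s(dhgoProj V₁ z u', (w' : V₂))) :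
    s(u, .inr w) = s(u', .inr w') := by
  rcases Sym2.eq_iff.1 he with ⟨hu, hw⟩ | ⟨hu, hw⟩
  · obtain rfl : w = w' := Subtype.ext hw
    rw [eq_of_adj_of_dhgoProj_eq h h' hu]
  · rcases u with a | v
    · exact absurd hu.symm w'.2
    rcases u' with a' | v'
    · exact absurd hw w.2
    obtain rfl : v = w' := Subtype.ext hu
    obtain rfl : w = v' := Subtype.ext hw
    exact Sym2.eq_swap

section Coloring

variable {H : SimpleGraph (V₁ ⊕ {w : V₂ // w ≠ z})}

theorem sumElim_ne_of_adj (hH : H ≤ dhgoGraph G₁ G₂ x y z P) {C₁ : V₁ → α} {C₂ : V₂ → α}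
    (hleft : ∀ a b, H.Adj (.inl a) (.inl b) → C₁ a ≠ C₁ b)
    (hright : ∀ v w, H.Adj (.inr v) (.inr w) → C₂ v ≠ C₂ w)
    (hx : ∀ w, H.Adj (.inl x) (.inr w) → (w : V₂) ∈ P → C₁ x ≠ C₂ w)
    (hy : ∀ w, H.Adj (.inl y) (.inr w) → G₂.Adj z w → (w : V₂) ∉ P → C₁ y ≠ C₂ w)
    {u v : V₁ ⊕ {w : V₂ // w ≠ z}} (huv : H.Adj u v) :
    Sum.elim C₁ (C₂ ∘ Subtype.val) u ≠ Sum.elim C₁ (C₂ ∘ Subtype.val) v := by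
  have hcross : ∀ a w, H.Adj (.inl a) (.inr w) → C₁ a ≠ C₂ w := fun a w haw => by
    rcases dhgoGraph_adj_inl_inr.1 (hH haw) with ⟨rfl, hw⟩ | ⟨rfl, hzw, hw⟩
    exacts [hx w haw hw, hy w haw hzw hw]
  rcases u with a | v' <;> rcases v with b | w
  exacts [hleft a b huv, hcross a w huv, (hcross b v' huv.symm).symm, hright v' w huv]

/- The half `x` of `z` may be precolored differently at each of its edges, the half `y` gets the
single color `C₁ y`; together they form an admissible precoloring of the split vertex `z`. -/
theorem IsSplitCritical.exists_coloring_extend_left (h₂ : IsSplitCritical α G₂)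
    (hP : P ⊆ G₂.neighborSet z) (hQ : (G₂.neighborSet z \ P).Nonempty)
    (hH : H ≤ dhgoGraph G₁ G₂ x y z P) {C₁ : V₁ → α} {g : {w : V₂ // w ≠ z} → α}
    (hleft : ∀ a b, H.Adj (.inl a) (.inl b) → C₁ a ≠ C₁ b)
    (hx : ∀ w, H.Adj (.inl x) (.inr w) → g w = C₁ x)
    (hg : ∃ w : {w : V₂ // w ≠ z}, (w : V₂) ∈ P ∧ g w ≠ C₁ y) :
    ∃ C : H.Coloring α, (∀ a, C (.inl a) = C₁ a) ∧
      ∀ w : {w : V₂ // w ≠ z}, (w : V₂) ∈ P → C (.inr w) ≠ g w := by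
  classical
  obtain ⟨p, hp, hgp⟩ := hg
  obtain ⟨q, hzq, hq⟩ := hQ
  obtain ⟨C₂, hC₂⟩ := h₂.exists_coloring_split z
      (fun w => if h : w ≠ z ∧ w ∈ P then g ⟨w, h.1⟩ else C₁ y) fun c => by
    by_cases hc : c = C₁ y
    · exact ⟨p, hP hp, by simpa [hp, p.2, hc] using hgp⟩
    · exact ⟨q, hzq, by simpa [hq] using Ne.symm hc⟩
  have hC₂P : ∀ w : {w : V₂ // w ≠ z}, (w : V₂) ∈ P → C₂ w ≠ g w := fun w hw => by
    simpa [w.2, hw] using hC₂ w (hP hw)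
  refine ⟨.mk _ (sumElim_ne_of_adj hH (C₂ := C₂) hleft (fun v w hvw => ?_) (fun w hxw hw => ?_)
    (fun w _ hzw hw => ?_)), fun a => rfl, hC₂P⟩
  · exact C₂.valid (deleteIncidenceSet_adj.2 ⟨dhgoGraph_adj_inr_inr.1 (hH hvw), v.2, w.2⟩)
  · exact hx w hxw ▸ (hC₂P w hw).symm
  · simpa [hw] using (hC₂ w hzw).symm

theorem IsSplitCritical.exists_coloring_extend_right (h₁ : IsSplitCritical α G₁)
    (hxy : G₁.Adj x y) (hH : H ≤ dhgoGraph G₁ G₂ x y z P) {C₂ : V₂ → α}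
    (hright : ∀ u w, H.Adj u (.inr w) → C₂ (dhgoProj V₁ z u) ≠ C₂ w) :
    ∃ C : H.Coloring α, C (.inl x) = C₂ z ∧ C (.inl y) = C₂ z ∧ ∀ w, C (.inr w) = C₂ w := by
  obtain ⟨C₁, hx, hy⟩ := h₁.exists_coloring_deleteEdges_eq hxy (C₂ z)
  refine ⟨.mk _ (sumElim_ne_of_adj hH (C₁ := C₁) (fun a b hab => C₁.valid ?_)
    (fun v w => hright (.inr v) w) (fun w hxw _ => hx ▸ hright _ w hxw)
    (fun w hyw _ _ => hy ▸ hright _ w hyw)), hx, hy, fun w => rfl⟩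
  exact deleteEdges_adj.2 (dhgoGraph_adj_inl_inl.1 (hH hab))

end Coloring

theorem isEmpty_coloring_dhgoGraph (h₁ : IsEmpty (G₁.Coloring α)) (h₂ : IsEmpty (G₂.Coloring α)) :
    IsEmpty ((dhgoGraph G₁ G₂ x y z P).Coloring α) := by
  classical
  refine ⟨fun C => ?_⟩
  have hCxy : C (.inl x) = C (.inl y) :=
    coloring_deleteEdges_eq h₁ (.mk (fun a => C (.inl a)) fun {a b} hab =>
      C.valid (dhgoGraph_adj_inl_inl.2 (deleteEdges_adj.1 hab)))
  let C₂ : V₂ → α := fun w => if h : w = z then C (.inl x) else C (.inr ⟨w, h⟩)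
  have hright : ∀ v (w : {w : V₂ // w ≠ z}), G₂.Adj v w → C₂ v ≠ C₂ w := fun v w hvw => by
    obtain ⟨u, huw, rfl⟩ := exists_adj_dhgoProj_eq G₁ x y P hvw
    have hu : C₂ (dhgoProj V₁ z u) = C u := by
      rcases u with a | v
      · rcases dhgoGraph_adj_inl_inr.1 huw with ⟨rfl, -⟩ | ⟨rfl, -⟩ <;> simp [C₂, hCxy]
      · simp [C₂, v.2]
    have hw : C₂ w = C (.inr w) := by simp [C₂, w.2]
    rw [hu, hw]
    exact C.valid huw
  refine h₂.false (.mk C₂ fun {v w} hvw => ?_)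
  by_cases hw : w = z
  · exact (hright w ⟨v, hw ▸ hvw.ne⟩ hvw.symm).symm
  · exact hright v ⟨w, hw⟩ hvw

theorem nonempty_coloring_dhgoGraph_deleteEdges_inl (h₁ : IsSplitCritical α G₁)
    (h₂ : IsSplitCritical α G₂) (hxy : G₁.Adj x y) (hP : P ⊆ G₂.neighborSet z) (hP₀ : P.Nonempty)
    (hQ : (G₂.neighborSet z \ P).Nonempty) {a b : V₁}
    (hab : (dhgoGraph G₁ G₂ x y z P).Adj (.inl a) (.inl b)) :
    Nonempty (((dhgoGraph G₁ G₂ x y z P).deleteEdges {s(.inl a, .inl b)}).Coloring α) := by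
  rw [dhgoGraph_adj_inl_inl] at hab
  obtain ⟨C₁⟩ := h₁.nonempty_coloring_deleteEdges hab.1
  have hC₁ : C₁ x ≠ C₁ y := C₁.valid (deleteEdges_adj.2 ⟨hxy, hab.2.symm⟩)
  obtain ⟨p, hp⟩ := hP₀
  have hleft : ∀ c d, ((dhgoGraph G₁ G₂ x y z P).deleteEdges {s(.inl a, .inl b)}).Adj
      (.inl c) (.inl d) → C₁ c ≠ C₁ d := fun c d hcd => C₁.valid <| by
    simp only [deleteEdges_adj, dhgoGraph_adj_inl_inl, Set.mem_singleton_iff, Sym2.eq_iff,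
      Sum.inl.injEq] at hcd ⊢
    exact ⟨hcd.1.1, hcd.2⟩
  obtain ⟨C, -⟩ := h₂.exists_coloring_extend_left hP hQ (deleteEdges_le _)
    (g := fun _ => C₁ x) hleft (fun _ _ => rfl) ⟨⟨p, (hP hp).ne'⟩, hp, hC₁⟩
  exact ⟨C⟩

theorem nonempty_coloring_dhgoGraph_deleteEdges_inr (h₁ : IsSplitCritical α G₁)
    (h₂ : IsSplitCritical α G₂) (hxy : G₁.Adj x y) (hP : P ⊆ G₂.neighborSet z)
    {u : V₁ ⊕ {w : V₂ // w ≠ z}} {w : {w : V₂ // w ≠ z}}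
    (huw : (dhgoGraph G₁ G₂ x y z P).Adj u (.inr w)) :
    Nonempty (((dhgoGraph G₁ G₂ x y z P).deleteEdges {s(u, .inr w)}).Coloring α) := by
  obtain ⟨C₂⟩ := h₂.nonempty_coloring_deleteEdges (adj_dhgoProj hP huw)
  have hright : ∀ u' w', ((dhgoGraph G₁ G₂ x y z P).deleteEdges {s(u, .inr w)}).Adj u' (.inr w') →
      C₂ (dhgoProj V₁ z u') ≠ C₂ w' := fun u' w' hu'w' => C₂.valid <| by
    rw [deleteEdges_adj] at hu'w' ⊢
    exact ⟨adj_dhgoProj hP hu'w'.1,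
      fun he => hu'w'.2 (sym2_eq_of_adj_of_dhgoProj_eq hu'w'.1 huw he)⟩
  obtain ⟨C, -⟩ := h₁.exists_coloring_extend_right hxy (deleteEdges_le _) hright
  exact ⟨C⟩

theorem adj_of_dhgoGraph_deleteIncidenceSet_adj {v a b : V₁}
    (h : ((dhgoGraph G₁ G₂ x y z P).deleteIncidenceSet (.inl v)).Adj (.inl a) (.inl b)) :
    (G₁.deleteIncidenceSet v).Adj a b := by
  simp only [deleteIncidenceSet_adj, dhgoGraph_adj_inl_inl, ne_eq, Sum.inl.injEq] at h ⊢
  exact ⟨h.1.1, h.2⟩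

theorem exists_coloring_dhgoGraph_split_inl (h₁ : IsSplitCritical α G₁) (h₂ : IsSplitCritical α G₂)
    (hxy : G₁.Adj x y) (hP : P ⊆ G₂.neighborSet z) (hP₀ : P.Nonempty)
    (hQ : (G₂.neighborSet z \ P).Nonempty) {v : V₁} (hvx : v ≠ x) (hvy : v ≠ y)
    (f : V₁ ⊕ {w : V₂ // w ≠ z} → α)
    (hf : ∀ c, ∃ u, (dhgoGraph G₁ G₂ x y z P).Adj (.inl v) u ∧ f u ≠ c) :
    ∃ C : ((dhgoGraph G₁ G₂ x y z P).deleteIncidenceSet (.inl v)).Coloring α,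
      ∀ u, (dhgoGraph G₁ G₂ x y z P).Adj (.inl v) u → C u ≠ f u := by
  obtain ⟨C₁, hC₁⟩ := h₁.exists_coloring_split v (fun a => f (.inl a)) fun c => by
    obtain ⟨a | w, hu, hfu⟩ := hf c
    · exact ⟨a, (dhgoGraph_adj_inl_inl.1 hu).1, hfu⟩
    · simp [hvx, hvy] at hu
  have hC₁xy : C₁ x ≠ C₁ y := C₁.valid (deleteIncidenceSet_adj.2 ⟨hxy, hvx.symm, hvy.symm⟩)
  obtain ⟨p, hp⟩ := hP₀
  obtain ⟨C, hC, -⟩ := h₂.exists_coloring_extend_left hP hQ (deleteIncidenceSet_le _ (.inl v))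
    (g := fun _ => C₁ x) (fun _ _ hab => C₁.valid (adj_of_dhgoGraph_deleteIncidenceSet_adj hab))
    (fun _ _ => rfl) ⟨⟨p, (hP hp).ne'⟩, hp, hC₁xy⟩
  refine ⟨C, ?_⟩
  rintro (a | w) hu
  · exact hC a ▸ hC₁ a (dhgoGraph_adj_inl_inl.1 hu).1
  · simp [hvx, hvy] at hu

theorem exists_coloring_dhgoGraph_split_inr (h₁ : IsSplitCritical α G₁) (h₂ : IsSplitCritical α G₂)
    (hxy : G₁.Adj x y) (hP : P ⊆ G₂.neighborSet z) (v : {w : V₂ // w ≠ z})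
    (f : V₁ ⊕ {w : V₂ // w ≠ z} → α)
    (hf : ∀ c, ∃ u, (dhgoGraph G₁ G₂ x y z P).Adj (.inr v) u ∧ f u ≠ c) :
    ∃ C : ((dhgoGraph G₁ G₂ x y z P).deleteIncidenceSet (.inr v)).Coloring α,
      ∀ u, (dhgoGraph G₁ G₂ x y z P).Adj (.inr v) u → C u ≠ f u := by
  classical
  set D := dhgoGraph G₁ G₂ x y z P
  let f₂ : V₂ → α := fun w =>
    if h : w = z then if (v : V₂) ∈ P then f (.inl x) else f (.inl y) else f (.inr ⟨w, h⟩)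
  have hf₂ : ∀ u, D.Adj u (.inr v) → f₂ (dhgoProj V₁ z u) = f u := by
    rintro (a | w) hu
    · rcases dhgoGraph_adj_inl_inr.1 hu with ⟨rfl, hv⟩ | ⟨rfl, -, hv⟩ <;> simp [f₂, hv]
    · simp [f₂, w.2]
  obtain ⟨C₂, hC₂⟩ := h₂.exists_coloring_split v f₂ fun c => by
    obtain ⟨u, hu, hfu⟩ := hf c
    exact ⟨_, (adj_dhgoProj hP hu.symm).symm, hf₂ u hu.symm ▸ hfu⟩
  have hright : ∀ u w, (D.deleteIncidenceSet (.inr v)).Adj u (.inr w) →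
      C₂ (dhgoProj V₁ z u) ≠ C₂ w := fun u w huw => C₂.valid <| by
    obtain ⟨huw, hu, hw⟩ := deleteIncidenceSet_adj.1 huw
    refine deleteIncidenceSet_adj.2 ⟨adj_dhgoProj hP huw, ?_, by simpa [Subtype.ext_iff] using hw⟩
    rcases u with a | v'
    · exact v.2.symm
    · simpa [Subtype.ext_iff] using hu
  obtain ⟨C, hCx, hCy, hC⟩ :=
    h₁.exists_coloring_extend_right hxy (deleteIncidenceSet_le D (.inr v)) hright
  have hCproj : ∀ u, D.Adj u (.inr v) → C u = C₂ (dhgoProj V₁ z u) := by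
    rintro (a | w) hu
    · rcases dhgoGraph_adj_inl_inr.1 hu with ⟨rfl, -⟩ | ⟨rfl, -⟩
      exacts [hCx, hCy]
    · exact hC w
  refine ⟨C, fun u hu => ?_⟩
  rw [hCproj u hu.symm, ← hf₂ u hu.symm]
  exact hC₂ _ (adj_dhgoProj hP hu.symm).symm

theorem exists_coloring_dhgoGraph_split_inl_left (h₁ : IsSplitCritical α G₁)
    (h₂ : IsSplitCritical α G₂) (hxy : G₁.Adj x y) (hP : P ⊆ G₂.neighborSet z) (hP₀ : P.Nonempty)
    (hQ : (G₂.neighborSet z \ P).Nonempty) (f : V₁ ⊕ {w : V₂ // w ≠ z} → α)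
    (hf : ∀ c, ∃ u, (dhgoGraph G₁ G₂ x y z P).Adj (.inl x) u ∧ f u ≠ c) :
    ∃ C : ((dhgoGraph G₁ G₂ x y z P).deleteIncidenceSet (.inl x)).Coloring α,
      ∀ u, (dhgoGraph G₁ G₂ x y z P).Adj (.inl x) u → C u ≠ f u := by
  obtain ⟨p, hp⟩ := hP₀
  have : Nonempty {w : {w : V₂ // w ≠ z} // (w : V₂) ∈ P} := ⟨⟨p, (hP hp).ne'⟩, hp⟩
  obtain ⟨C₁, hC₁, w, hw⟩ := h₁.exists_coloring_split_erase_ne hxy (fun a => f (.inl a))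
    (fun w : {w : {w : V₂ // w ≠ z} // (w : V₂) ∈ P} => f (.inr w)) fun c => by
      obtain ⟨a | w, hu, hfu⟩ := hf c
      · have ha : G₁.Adj x a ∧ a ≠ y := by simpa [hxy.ne] using hu
        exact .inl ⟨a, ha.1, ha.2, hfu⟩
      · exact .inr ⟨⟨w, by simpa [hxy.ne] using hu⟩, hfu⟩
  obtain ⟨C, hC, hCP⟩ := h₂.exists_coloring_extend_left hP hQ (deleteIncidenceSet_le _ (.inl x))
    (C₁ := C₁) (g := fun w => f (.inr w))
    (fun _ _ hab => C₁.valid (adj_of_dhgoGraph_deleteIncidenceSet_adj hab))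
    (fun w hxw => absurd rfl (deleteIncidenceSet_adj.1 hxw).2.1) ⟨w, w.2, hw⟩
  refine ⟨C, ?_⟩
  rintro (a | w) hu
  · have ha : G₁.Adj x a ∧ a ≠ y := by simpa [hxy.ne] using hu
    exact hC a ▸ hC₁ a ha.1 ha.2
  · exact hCP w (by simpa [hxy.ne] using hu)

theorem IsSplitCritical.dhgoGraph (h₁ : IsSplitCritical α G₁) (h₂ : IsSplitCritical α G₂)
    (hxy : G₁.Adj x y) (hP : P ⊆ G₂.neighborSet z) (hP₀ : P.Nonempty)
    (hQ : (G₂.neighborSet z \ P).Nonempty) : IsSplitCritical α (dhgoGraph G₁ G₂ x y z P) where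
  isEmpty_coloring := isEmpty_coloring_dhgoGraph h₁.isEmpty_coloring h₂.isEmpty_coloring
  nonempty_coloring_deleteEdges := by
    rintro (a | v) (b | w) huv
    · exact nonempty_coloring_dhgoGraph_deleteEdges_inl h₁ h₂ hxy hP hP₀ hQ huv
    · exact nonempty_coloring_dhgoGraph_deleteEdges_inr h₁ h₂ hxy hP huv
    · rw [Sym2.eq_swap]
      exact nonempty_coloring_dhgoGraph_deleteEdges_inr h₁ h₂ hxy hP huv.symm
    · exact nonempty_coloring_dhgoGraph_deleteEdges_inr h₁ h₂ hxy hP huv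
  exists_coloring_split := by
    rintro (v | v) f hf
    · by_cases hvx : v = x
      · subst hvx
        exact exists_coloring_dhgoGraph_split_inl_left h₁ h₂ hxy hP hP₀ hQ f hf
      by_cases hvy : v = y
      · subst hvy
        rw [dhgoGraph_swap hP] at hf ⊢
        refine exists_coloring_dhgoGraph_split_inl_left h₁ h₂ hxy.symm Set.sdiff_subset hQ ?_ f hf
        rwa [Set.sdiff_sdiff_cancel_left hP]
      · exact exists_coloring_dhgoGraph_split_inl h₁ h₂ hxy hP hP₀ hQ hvx hvy f hf
    · exact exists_coloring_dhgoGraph_split_inr h₁ h₂ hxy hP v f hf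

theorem injOn_sym2Map_dhgoProj : Set.InjOn (Sym2.map (dhgoProj V₁ z))
    {e ∈ (dhgoGraph G₁ G₂ x y z P).edgeSet | ∃ w, Sum.inr w ∈ e} := by
  rintro _ ⟨he, w, u, rfl⟩ _ ⟨he', w', u', rfl⟩ hmap
  calc s(.inr w, u) = s(u, .inr w) := Sym2.eq_swap
    _ = s(u', .inr w') := sym2_eq_of_adj_of_dhgoProj_eq he.symm he'.symm
      (Sym2.eq_swap.trans (hmap.trans Sym2.eq_swap))
    _ = s(.inr w', u') := Sym2.eq_swap

theorem image_sym2Map_dhgoProj (hP : P ⊆ G₂.neighborSet z) : Sym2.map (dhgoProj V₁ z) ''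
    {e ∈ (dhgoGraph G₁ G₂ x y z P).edgeSet | ∃ w, Sum.inr w ∈ e} = G₂.edgeSet := by
  ext e
  constructor
  · rintro ⟨_, ⟨he, w, u, rfl⟩, rfl⟩
    exact (adj_dhgoProj hP he.symm).symm
  · intro he
    have hlift : ∀ v (w : {w : V₂ // w ≠ z}), G₂.Adj v w → s(v, (w : V₂)) ∈
        Sym2.map (dhgoProj V₁ z) ''
          {e ∈ (dhgoGraph G₁ G₂ x y z P).edgeSet | ∃ w, Sum.inr w ∈ e} := fun v w hvw => by
      obtain ⟨u, huw, rfl⟩ := exists_adj_dhgoProj_eq G₁ x y P hvw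
      exact ⟨s(u, .inr w), ⟨huw, w, Sym2.mem_mk_right _ _⟩, rfl⟩
    induction e with
    | _ v w =>
      by_cases hw : w = z
      · rw [Sym2.eq_swap]
        exact hlift w ⟨v, hw ▸ he.ne⟩ he.symm
      · exact hlift v ⟨w, hw⟩ he

theorem edgeSet_dhgoGraph : (dhgoGraph G₁ G₂ x y z P).edgeSet =
    Sym2.map Sum.inl '' (G₁.edgeSet \ {s(x, y)}) ∪
      {e ∈ (dhgoGraph G₁ G₂ x y z P).edgeSet | ∃ w, Sum.inr w ∈ e} := by
  ext e
  constructor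
  · intro he
    induction e with
    | _ u v =>
      rcases u with a | v' <;> rcases v with b | w
      · exact .inl ⟨s(a, b), (dhgoGraph_adj_inl_inl (G₂ := G₂) (P := P)).1 he, rfl⟩
      · exact .inr ⟨he, w, by simp⟩
      · exact .inr ⟨he, v', by simp⟩
      · exact .inr ⟨he, w, by simp⟩
  · rintro (⟨e, he, rfl⟩ | he)
    · induction e with
      | _ a b => exact (dhgoGraph_adj_inl_inl (G₂ := G₂) (P := P)).2 he
    · exact he.1

theorem ncard_edgeSet_dhgoGraph [Finite V₁] [Finite V₂] (hxy : G₁.Adj x y)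
    (hP : P ⊆ G₂.neighborSet z) :
    (dhgoGraph G₁ G₂ x y z P).edgeSet.ncard + 1 = G₁.edgeSet.ncard + G₂.edgeSet.ncard := by
  have hdisj : Disjoint (Sym2.map Sum.inl '' (G₁.edgeSet \ {s(x, y)}))
      {e ∈ (dhgoGraph G₁ G₂ x y z P).edgeSet | ∃ w, Sum.inr w ∈ e} := by
    rw [Set.disjoint_left]
    rintro _ ⟨e, -, rfl⟩ ⟨-, w, hw⟩
    simp [Sym2.mem_map] at hw
  rw [edgeSet_dhgoGraph, Set.ncard_union_eq hdisj (Set.toFinite _) (Set.toFinite _),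
    Set.ncard_image_of_injective _ (Sym2.map.injective Sum.inl_injective),
    ← injOn_sym2Map_dhgoProj.ncard_image, image_sym2Map_dhgoProj hP,
    add_right_comm, Set.ncard_sdiff_singleton_add_one ((mem_edgeSet G₁).2 hxy)]

end Composition

section IsDHGO

variable {α U V₁ V₂ : Type*} {G : SimpleGraph U} {G₁ : SimpleGraph V₁} {G₂ : SimpleGraph V₂}

theorem IsDHGO.isSplitCritical (h : IsDHGO G G₁ G₂) (h₁ : IsSplitCritical α G₁)
    (h₂ : IsSplitCritical α G₂) : IsSplitCritical α G := by
  obtain ⟨x, y, z, P, hxy, hP, hP₀, hQ, ⟨e⟩⟩ := h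
  exact (h₁.dhgoGraph h₂ hxy hP hP₀ hQ).of_iso e

theorem ncard_edgeSet_congr (e : G ≃g G₁) : G.edgeSet.ncard = G₁.edgeSet.ncard :=
  Nat.card_congr e.mapEdgeSet

theorem IsDHGO.ncard_edgeSet_add_one [Finite V₁] [Finite V₂] (h : IsDHGO G G₁ G₂) :
    G.edgeSet.ncard + 1 = G₁.edgeSet.ncard + G₂.edgeSet.ncard := by
  obtain ⟨x, y, z, P, hxy, hP, -, -, ⟨e⟩⟩ := h
  rw [ncard_edgeSet_congr e, ncard_edgeSet_dhgoGraph hxy hP]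

theorem IsDHGO.card_add_one [Finite V₁] [Finite V₂] (h : IsDHGO G G₁ G₂) :
    Nat.card U + 1 = Nat.card V₁ + Nat.card V₂ := by
  obtain ⟨x, y, z, P, -, -, -, -, ⟨e⟩⟩ := h
  rw [Nat.card_congr e.toEquiv, Nat.card_sum, add_assoc]
  classical
  rw [← Finite.card_option, Nat.card_congr (Equiv.optionSubtypeNe z)]

end IsDHGO

section Ore

variable {k n : ℕ} {G : SimpleGraph (Fin n)}

theorem IsOreFin.isSplitCritical (hk : 0 < k) (hG : IsOreFin k G) :
    IsSplitCritical (Fin (k - 1)) G := by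
  induction hG with
  | complete h => exact (isSplitCritical_top (by simp; omega)).of_iso h.some
  | comp _ _ h ih₁ ih₂ => exact h.isSplitCritical ih₁ ih₂

theorem two_mul_ncard_edgeSet_top (V : Type*) [Finite V] :
    2 * ((⊤ : SimpleGraph V).edgeSet.ncard : ℤ) = Nat.card V * (Nat.card V - 1) := by
  classical
  have := Fintype.ofFinite V
  have hE : (⊤ : SimpleGraph V).edgeSet.ncard = (Nat.card V).choose 2 := by
    rw [← coe_edgeFinset, Set.ncard_coe_finset, card_edgeFinset_top_eq_card_choose_two,
      Nat.card_eq_fintype_card]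
  have hE' : (2 * (Nat.card V).choose 2 : ℚ) = Nat.card V * (Nat.card V - 1) := by
    rw [Nat.cast_choose_two, mul_div_cancel₀ _ two_ne_zero]
  rw [hE]
  exact_mod_cast hE'

theorem IsOreFin.two_mul_ncard_edgeSet (hG : IsOreFin k G) :
    2 * ((k : ℤ) - 1) * G.edgeSet.ncard =
      ((k : ℤ) + 1) * ((k : ℤ) - 2) * n - (k : ℤ) * ((k : ℤ) - 3) := by
  induction hG with
  | complete h =>
    obtain ⟨e⟩ := h
    have hn := Nat.card_congr e.toEquiv
    rw [Nat.card_fin, Nat.card_fin] at hn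
    have hE := two_mul_ncard_edgeSet_top (Fin k)
    rw [Nat.card_fin] at hE
    rw [ncard_edgeSet_congr e, hn]
    linear_combination ((k : ℤ) - 1) * hE
  | comp _ _ h ih₁ ih₂ =>
    have hE := congrArg (Nat.cast (R := ℤ)) h.ncard_edgeSet_add_one
    have hV := congrArg (Nat.cast (R := ℤ)) h.card_add_one
    simp only [Nat.card_fin] at hV
    push_cast at hE hV
    linear_combination ih₁ + ih₂ + 2 * ((k : ℤ) - 1) * hE - ((k : ℤ) + 1) * ((k : ℤ) - 2) * hV

theorem IsOreFin.modEq_one (hk : 0 < k) (hG : IsOreFin k G) : n ≡ 1 [MOD k - 1] := by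
  induction hG with
  | complete h =>
    have hn := Nat.card_congr h.some.toEquiv
    rw [Nat.card_fin, Nat.card_fin] at hn
    rw [hn, Nat.ModEq.comm, Nat.modEq_iff_dvd' hk]
  | comp _ _ h ih₁ ih₂ =>
    have hV := h.card_add_one
    simp only [Nat.card_fin] at hV
    exact Nat.ModEq.add_right_cancel' 1 (hV ▸ ih₁.add ih₂)

end Ore

theorem kOre_critical_extremal_card_general {V : Type*} [Fintype V] (k : ℕ) (hk : 0 < k)
    (G : SimpleGraph V) [DecidableRel G.Adj] (hG : IsKOre k G) :
    IsKCritical k G ∧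
      2 * ((k : ℤ) - 1) * G.edgeFinset.card =
        ((k : ℤ) + 1) * ((k : ℤ) - 2) * Fintype.card V - (k : ℤ) * ((k : ℤ) - 3) ∧
      Fintype.card V ≡ 1 [MOD k - 1] := by
  obtain ⟨n, H, hH, ⟨e⟩⟩ := hG
  have hV : Fintype.card V = n := by simpa using Fintype.card_congr e.toEquiv
  have hE : G.edgeFinset.card = H.edgeSet.ncard := by
    rw [← ncard_edgeSet_congr e, ← coe_edgeFinset, Set.ncard_coe_finset]
  rw [hV, hE]
  exact ⟨((hH.isSplitCritical hk).of_iso e).isKCritical hk, hH.two_mul_ncard_edgeSet,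
    hH.modEq_one hk⟩

/-- **Theorem.** Let `k ≥ 4`. Every `k`-Ore graph `G` is `k`-critical, satisfies
`2(k-1)|E(G)| = (k+1)(k-2)|V(G)| - k(k-3)`, and has `|V(G)| ≡ 1 (mod k-1)`. -/
theorem kOre_critical_extremal_card {V : Type*} [Fintype V] [DecidableEq V] (k : ℕ)
    (hk : 4 ≤ k) (G : SimpleGraph V) [DecidableRel G.Adj] (hG : IsKOre k G) :
    IsKCritical k G ∧
      2 * ((k : ℤ) - 1) * G.edgeFinset.card =
        ((k : ℤ) + 1) * ((k : ℤ) - 2) * Fintype.card V - (k : ℤ) * ((k : ℤ) - 3) ∧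
      Fintype.card V ≡ 1 [MOD k - 1] :=
  kOre_critical_extremal_card_general k (by omega) G hG
end

section
/- Let k ≥ 4, let G be a k-Ore graph, and let W be a proper subset of V(G) with |W| ≥ 2 and ρ_{k,G}(W) ≤ (k+1)(k−2). Then the induced subgraph G[W] is connected and W contains a standard set of G. -/
open SimpleGraph

/-!
Let `ρ` be the potential and let `D` be a DHGO-composition of `G₁` and `G₂`. A vertex set `W` of `D`
has a trace `W₁` on `G₁` and, after the split vertex `z` is identified with `x`, a trace `W₂` on
`G₂`. If `W` meets `{x, y}`, then by symmetry it contains `x`, and counting edges gives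
`ρ_D(W) = ρ_{G₁ - xy}(W₁) + ρ_{G₂}(W₂) - (k+1)(k-2) + 2(k-1)ℓ`, where `ℓ` is the number of edges at
`z` that leave `W` because `y ∉ W`. The whole vertex set of a `k`-Ore graph has potential
`(k+1)(k-2) - 2(k-1)`, so by induction every nonempty proper vertex set has potential at least
`(k+1)(k-2)`, and if equality holds for `W`, then the formula shows which traces are extremal.

A standard set contained in `W` is then either all of `G₁` (attached at `x` and `y`), all of `G₂`
(attached at `x` and the unique neighbor of `y` in `G₂`), or it comes from a standard set of a
factor, which survives in `D`; a standard set of `G₁` that contains both `x` and `y` has to be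
extended by all of `G₂`.

The coloring arguments run on a strengthening of criticality that is inherited by compositions:
for every vertex `z` and every nonconstant assignment `g` of forbidden colors to the neighbors of
`z`, the graph `G - z` has a proper `(k-1)`-coloring that avoids `g`.
-/

namespace KOre

section Coloring

variable {V U C D : Type*} {G H : SimpleGraph V} {S T W : Set V} {φ ψ : V → C}

/-- `φ` restricts to a proper coloring of the induced subgraph `G[W]`. Colorings are functions on
all of `V`, so that one function can be compared on several vertex sets. -/
def IsProperOn (G : SimpleGraph V) (W : Set V) (φ : V → C) : Prop :=
  ∀ ⦃a⦄, a ∈ W → ∀ ⦃b⦄, b ∈ W → G.Adj a b → φ a ≠ φ b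

theorem IsProperOn.mono (hφ : IsProperOn G W φ) (hGH : H ≤ G) (hSW : S ⊆ W) : IsProperOn H S φ :=
  fun _ ha _ hb hab => hφ (hSW ha) (hSW hb) (hGH hab)

theorem IsProperOn.comap {K : SimpleGraph U} {R : Set U} (hφ : IsProperOn G W φ) {f : U → V}
    (hf : Set.MapsTo f R W) (hadj : ∀ a ∈ R, ∀ b ∈ R, K.Adj a b → G.Adj (f a) (f b)) :
    IsProperOn K R (φ ∘ f) :=
  fun a ha b hb hab => hφ (hf ha) (hf hb) (hadj a ha b hb hab)

theorem IsProperOn.comp_injective (hφ : IsProperOn G W φ) {g : C → D} (hg : g.Injective) :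
    IsProperOn G W (g ∘ φ) :=
  fun _ ha _ hb hab => hg.ne (hφ ha hb hab)

theorem IsProperOn.of_deleteEdges {u v : V} (hφ : IsProperOn (G.deleteEdges {s(u, v)}) W φ)
    (huv : φ u ≠ φ v) : IsProperOn G W φ := by
  intro a ha b hb hab
  by_cases he : s(a, b) = s(u, v)
  · obtain ⟨rfl, rfl⟩ | ⟨rfl, rfl⟩ := Sym2.eq_iff.1 he
    exacts [huv, huv.symm]
  · exact hφ ha hb (deleteEdges_adj.2 ⟨hab, he⟩)

theorem IsProperOn.sumElim {K : SimpleGraph (V ⊕ U)} {W : Set (V ⊕ U)} {ψ : U → C}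
    (hφ : IsProperOn (K.comap Sum.inl) (Sum.inl ⁻¹' W) φ)
    (hψ : IsProperOn (K.comap Sum.inr) (Sum.inr ⁻¹' W) ψ)
    (hne : ∀ a b, Sum.inl a ∈ W → Sum.inr b ∈ W → K.Adj (Sum.inl a) (Sum.inr b) → φ a ≠ ψ b) :
    IsProperOn K W (Sum.elim φ ψ) := by
  rintro (a | a) ha (b | b) hb hab
  exacts [hφ ha hb hab, hne a b ha hb hab, (hne b a hb ha hab.symm).symm, hψ ha hb hab]

open Classical in
theorem IsProperOn.piecewise {A : Set V} (hφ : IsProperOn G S φ) (hψ : IsProperOn G T ψ)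
    (hA : A ⊆ S) (hA' : Aᶜ ⊆ T)
    (hcross : ∀ a ∈ A, ∀ b ∉ A, G.Adj a b → a ∈ T ∧ φ a = ψ a) :
    IsProperOn G Set.univ (A.piecewise φ ψ) := by
  have cross : ∀ a ∈ A, ∀ b ∉ A, G.Adj a b → φ a ≠ ψ b := fun a ha b hb hab =>
    have ⟨haT, e⟩ := hcross a ha b hb hab
    e ▸ hψ haT (hA' hb) hab
  intro a _ b _ hab
  by_cases ha : a ∈ A <;> by_cases hb : b ∈ A <;>
    simp only [Set.piecewise, ha, hb, if_true, if_false]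
  exacts [hφ (hA ha) (hA hb) hab, cross a ha b hb hab, (cross b hb a ha hab.symm).symm,
    hψ (hA' ha) (hA' hb) hab]

theorem IsProperOn.update [DecidableEq V] {z : V} {c : C} (hφ : IsProperOn G {z}ᶜ φ)
    (hc : ∀ w, G.Adj z w → φ w ≠ c) : IsProperOn G Set.univ (Function.update φ z c) := by
  intro a _ b _ hab
  by_cases ha : a = z
  · subst ha
    simpa only [Function.update_self, Function.update_of_ne hab.ne'] using (hc b hab).symm
  · by_cases hb : b = z
    · subst hb
      simpa only [Function.update_self, Function.update_of_ne ha] using hc a hab.symm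
    · simpa only [Function.update_of_ne ha, Function.update_of_ne hb] using hφ ha hb hab

/-- `S` is a quasi-`xy`-vertex of `G` with respect to colorings with values in `C`; see
`IsQuasi.isQuasiVertex` for the comparison with `IsQuasiVertex`. -/
structure IsQuasi (C : Type*) (G : SimpleGraph V) (x y : V) (S : Set V) : Prop where
  exists_isProperOn : ∃ φ : V → C, IsProperOn G S φ
  eq_of_isProperOn : ∀ φ : V → C, IsProperOn G S φ → φ x = φ y
  exists_ne : ∀ a ∈ S, ∀ b ∈ S, G.Adj a b →
    ∃ φ : V → C, IsProperOn (G.deleteEdges {s(a, b)}) S φ ∧ φ x ≠ φ y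

theorem IsQuasi.notMem_pair_or_notMem_pair {x y a b : V} (h : IsQuasi C G x y S) (ha : a ∈ S)
    (hb : b ∈ S) (hab : G.Adj a b) : a ∉ ({x, y} : Set V) ∨ b ∉ ({x, y} : Set V) := by
  by_contra! hcon
  obtain ⟨φ, hφ⟩ := h.exists_isProperOn
  have hxy := h.eq_of_isProperOn φ hφ
  obtain ⟨rfl | rfl, rfl | rfl⟩ := hcon
  exacts [hab.ne rfl, hφ ha hb hab hxy, hφ ha hb hab hxy.symm, hab.ne rfl]

theorem IsQuasi.image {K : SimpleGraph U} {f : V → U} (hf : f.Injective)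
    (hadj : ∀ a ∈ S, ∀ b ∈ S, K.Adj (f a) (f b) ↔ G.Adj a b) {x y : V}
    (h : IsQuasi C G x y S) : IsQuasi C K (f x) (f y) (f '' S) := by
  have : Nonempty V := ⟨x⟩
  obtain ⟨g, hg⟩ := hf.hasLeftInverse
  have hmaps : Set.MapsTo g (f '' S) S := by
    rintro _ ⟨a, ha, rfl⟩
    rwa [hg a]
  refine ⟨?_, fun φ hφ => ?_, ?_⟩
  · obtain ⟨φ, hφ⟩ := h.exists_isProperOn
    refine ⟨φ ∘ g, hφ.comap hmaps ?_⟩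
    rintro _ ⟨a, ha, rfl⟩ _ ⟨b, hb, rfl⟩ hab
    rwa [hg, hg, ← hadj a ha b hb]
  · exact h.eq_of_isProperOn (φ ∘ f)
      (hφ.comap (Set.mapsTo_image f S) fun a ha b hb => (hadj a ha b hb).2)
  · rintro _ ⟨a, ha, rfl⟩ _ ⟨b, hb, rfl⟩ hab
    obtain ⟨φ, hφ, hne⟩ := h.exists_ne a ha b hb ((hadj a ha b hb).1 hab)
    refine ⟨φ ∘ g, hφ.comap hmaps ?_, by simpa only [Function.comp_apply, hg _] using hne⟩
    rintro _ ⟨c, hc, rfl⟩ _ ⟨d, hd, rfl⟩ hcd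
    rw [deleteEdges_adj, ← Sym2.map_mk, ← Sym2.map_mk, Set.mem_singleton_iff,
      (Sym2.map.injective hf).eq_iff] at hcd
    rw [hg, hg, deleteEdges_adj]
    exact ⟨(hadj c hc d hd).1 hcd.1, hcd.2⟩

end Coloring

section Connectivity

variable {V U : Type*} {G : SimpleGraph V} {W A : Set V}

/-- `A` is closed in `G[W]` under passing to neighbors, i.e. `A ∩ W` is a union of components. -/
def IsClosedIn (G : SimpleGraph V) (W A : Set V) : Prop :=
  ∀ a ∈ W, a ∈ A → ∀ b ∈ W, G.Adj a b → b ∈ A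

theorem connected_induce_of_isClosedIn {p : V} (hp : p ∈ W)
    (h : ∀ A, p ∈ A → IsClosedIn G W A → W ⊆ A) : (G.induce W).Connected := by
  refine (connected_iff_exists_forall_reachable _).2 ⟨⟨p, hp⟩, fun w => ?_⟩
  obtain ⟨_, hr⟩ := h {v | ∃ hv : v ∈ W, (G.induce W).Reachable ⟨p, hp⟩ ⟨v, hv⟩} ⟨hp, .refl _⟩
    (fun a _ ⟨_, har⟩ b hb hab => ⟨hb, har.trans (Adj.reachable hab)⟩) w.2
  exact hr

theorem subset_of_isClosedIn (hW : (G.induce W).Connected) (hA : IsClosedIn G W A)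
    (hWA : (W ∩ A).Nonempty) : W ⊆ A := by
  obtain ⟨q, hqW, hqA⟩ := hWA
  intro w hw
  obtain ⟨p⟩ := hW.preconnected ⟨q, hqW⟩ ⟨w, hw⟩
  suffices ∀ {u v : W}, (G.induce W).Walk u v → (u : V) ∈ A → (v : V) ∈ A from this p hqA
  intro u v p
  induction p with
  | nil => exact id
  | cons h _ ih => exact fun hu => ih (hA _ (Subtype.prop _) hu _ (Subtype.prop _) h)

theorem induce_deleteEdges_of_notMem {u v : V} (huv : ¬(u ∈ W ∧ v ∈ W)) :
    (G.deleteEdges {s(u, v)}).induce W = G.induce W := by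
  ext a b
  rw [induce_adj, induce_adj, deleteEdges_adj, and_iff_left]
  intro h
  obtain ⟨rfl, rfl⟩ | ⟨rfl, rfl⟩ := Sym2.eq_iff.1 h
  exacts [huv ⟨a.2, b.2⟩, huv ⟨b.2, a.2⟩]

theorem connected_induce_singleton (G : SimpleGraph V) (v : V) :
    (G.induce {v}).Connected :=
  connected_induce_of_isClosedIn rfl fun _ hv _ => Set.singleton_subset_iff.2 hv

theorem connected_induce_image {K : SimpleGraph U} {f : V → U}
    (hadj : ∀ a ∈ W, ∀ b ∈ W, G.Adj a b → K.Adj (f a) (f b)) (hW : (G.induce W).Connected) :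
    (K.induce (f '' W)).Connected := by
  obtain ⟨⟨p, hp⟩⟩ := hW.nonempty
  refine connected_induce_of_isClosedIn (Set.mem_image_of_mem f hp) fun A hpA hA => ?_
  rw [Set.image_subset_iff]
  exact subset_of_isClosedIn hW (fun a ha haA b hb hab => hA _ (Set.mem_image_of_mem f ha) haA _
    (Set.mem_image_of_mem f hb) (hadj a ha b hb hab)) ⟨p, hp, hpA⟩

end Connectivity

theorem exists_perm_apply_eq_and_apply_eq {C : Type*} {c₁ c₂ d₁ d₂ : C} (h : c₁ = c₂ ↔ d₁ = d₂) :
    ∃ π : Equiv.Perm C, π c₁ = d₁ ∧ π c₂ = d₂ := by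
  classical
  by_cases hc : c₁ = c₂
  · exact ⟨Equiv.swap c₁ d₁, Equiv.swap_apply_left .., by
      rw [← hc, ← h.1 hc, Equiv.swap_apply_left]⟩
  · exact MulAction.is_two_pretransitive_iff.1
      (Equiv.Perm.isMultiplyPretransitive C 2) hc (mt h.2 hc)

section SplittingCritical

variable {V C : Type*} {G : SimpleGraph V}

/-- `G` is not colorable with colors from `C`, but becomes so as soon as any vertex `z` is split
into vertices of positive degree: each neighbor `w` of `z` may be made adjacent to a new vertex of
color `f w` instead of `z`, provided that `f` takes at least two values on the neighbors.
All degrees are required to be at least two, so that every vertex can be split.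
For `C` with `k - 1` elements this strengthens `k`-criticality, and unlike the latter it
carries enough information to be preserved by DHGO-compositions by a direct argument. -/
structure IsSplittingCritical (C : Type*) (G : SimpleGraph V) : Prop where
  not_isProperOn : ∀ φ : V → C, ¬IsProperOn G Set.univ φ
  neighborSet_nontrivial : ∀ z, (G.neighborSet z).Nontrivial
  exists_avoiding : ∀ (z : V) (f : V → C) (u v : V), G.Adj z u → G.Adj z v → f u ≠ f v →
    ∃ φ : V → C, IsProperOn G {z}ᶜ φ ∧ ∀ w, G.Adj z w → φ w ≠ f w

namespace IsSplittingCritical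

theorem exists_adj_ne (h : IsSplittingCritical C G) (u v : V) : ∃ w, G.Adj u w ∧ w ≠ v :=
  (h.neighborSet_nontrivial u).exists_ne v

theorem apply_eq_of_isProperOn_deleteEdges (h : IsSplittingCritical C G) {u v : V} {φ : V → C}
    (hφ : IsProperOn (G.deleteEdges {s(u, v)}) Set.univ φ) : φ u = φ v :=
  not_not.1 fun hne => h.not_isProperOn φ (hφ.of_deleteEdges hne)

variable [Nontrivial C]

theorem exists_isProperOn_deleteEdges (h : IsSplittingCritical C G) {u v : V} (huv : G.Adj u v)
    (c : C) :
    ∃ φ : V → C, IsProperOn (G.deleteEdges {s(u, v)}) Set.univ φ ∧ φ u = c ∧ φ v = c := by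
  classical
  obtain ⟨d, hdc⟩ := exists_ne c
  obtain ⟨w, huw, hwv⟩ := h.exists_adj_ne u v
  obtain ⟨φ, hφ, hne⟩ := h.exists_avoiding u (Function.update (fun _ => c) v d) v w huv huw
    (by simpa only [Function.update_self, Function.update_of_ne hwv] using hdc)
  have hproper : IsProperOn (G.deleteEdges {s(u, v)}) Set.univ (Function.update φ u c) := by
    refine (hφ.mono (deleteEdges_le _) subset_rfl).update fun x hux => ?_
    have hxv : x ≠ v := by
      rintro rfl
      exact (deleteEdges_adj.1 hux).2 rfl
    simpa only [Function.update_of_ne hxv] using hne x (deleteEdges_adj.1 hux).1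
  refine ⟨_, hproper, Function.update_self .., ?_⟩
  rw [← h.apply_eq_of_isProperOn_deleteEdges hproper, Function.update_self]

theorem exists_isProperOn_compl_singleton (h : IsSplittingCritical C G) (z : V) :
    ∃ φ : V → C, IsProperOn G {z}ᶜ φ := by
  classical
  obtain ⟨u, hu, v, hv, huv⟩ := h.neighborSet_nontrivial z
  obtain ⟨c, d, hcd⟩ := exists_pair_ne C
  obtain ⟨φ, hφ, -⟩ := h.exists_avoiding z (Function.update (fun _ => c) v d) u v hu hv
    (by simpa only [Function.update_self, Function.update_of_ne huv] using hcd)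
  exact ⟨φ, hφ⟩

theorem connected_induce_compl_pair (h : IsSplittingCritical C G) {u v : V}
    (huv : u = v ∨ G.Adj u v) : (G.induce {u, v}ᶜ).Connected := by
  classical
  obtain ⟨p, hup, hpv⟩ := h.exists_adj_ne u v
  refine connected_induce_of_isClosedIn (p := p) (by simp [hup.ne', hpv]) fun A hpA hA q hq => ?_
  by_contra hqA
  obtain ⟨hqu, hqv⟩ : q ≠ u ∧ q ≠ v := by simpa using hq
  obtain ⟨φ, hφ⟩ := h.exists_isProperOn_compl_singleton p
  obtain ⟨ψ, hψ⟩ := h.exists_isProperOn_compl_singleton q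
  have hiff : φ u = φ v ↔ ψ u = ψ v := by
    obtain rfl | huv := huv
    · simp only
    · exact iff_of_false (hφ hup.ne hpv.symm huv) (hψ hqu.symm hqv.symm huv)
  obtain ⟨π, hπu, hπv⟩ := exists_perm_apply_eq_and_apply_eq hiff
  refine h.not_isProperOn _ (IsProperOn.piecewise (A := A ∪ {u, v}) hψ
    (hφ.comp_injective π.injective) ?_ ?_ ?_)
  · rintro a ha rfl
    obtain ha | rfl | rfl := ha <;> contradiction
  · rintro a ha rfl
    exact ha (Or.inl hpA)
  · intro a ha b hb hab
    have : a ∉ A ∨ a = u ∨ a = v := by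
      by_contra! hcon
      exact hb (Or.inl (hA a (by simp [hcon]) hcon.1 b (fun hb' => hb (Or.inr hb')) hab))
    obtain rfl | rfl : a = u ∨ a = v := by
      simp only [Set.mem_union, Set.mem_insert_iff, Set.mem_singleton_iff] at ha
      tauto
    exacts [⟨hup.ne, hπu.symm⟩, ⟨hpv.symm, hπv.symm⟩]

theorem connected_induce_compl_singleton (h : IsSplittingCritical C G) (z : V) :
    (G.induce {z}ᶜ).Connected :=
  Set.pair_eq_singleton z ▸ h.connected_induce_compl_pair (Or.inl rfl)

theorem connected_induce_univ_deleteEdges (h : IsSplittingCritical C G) (u v : V) :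
    ((G.deleteEdges {s(u, v)}).induce Set.univ).Connected := by
  obtain ⟨w, huw, hwv⟩ := h.exists_adj_ne u v
  refine connected_induce_of_isClosedIn (Set.mem_univ u) fun A hu hA => ?_
  have hw : w ∈ A := hA u trivial hu w trivial (deleteEdges_adj.2 ⟨huw, by simp [huw.ne', hwv]⟩)
  have hsub : {u}ᶜ ⊆ A := by
    refine subset_of_isClosedIn (h.connected_induce_compl_singleton u)
      (fun a ha haA b hb hab => hA a trivial haA b trivial (deleteEdges_adj.2 ⟨hab, ?_⟩))
      ⟨w, huw.ne', hw⟩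
    rintro e
    exact (Sym2.mem_iff.1 ((Set.mem_singleton_iff.1 e) ▸ Sym2.mem_mk_left u v)).elim
      (ha ·.symm) (hb ·.symm)
  intro a _
  by_cases ha : a = u
  exacts [ha ▸ hu, hsub ha]

theorem isQuasi_deleteEdges (h : IsSplittingCritical C G) {u v : V} (huv : G.Adj u v) :
    IsQuasi C (G.deleteEdges {s(u, v)}) u v Set.univ where
  exists_isProperOn :=
    have ⟨c⟩ := (inferInstance : Nonempty C)
    have ⟨φ, hφ, _⟩ := h.exists_isProperOn_deleteEdges huv c
    ⟨φ, hφ⟩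
  eq_of_isProperOn _ hφ := h.apply_eq_of_isProperOn_deleteEdges hφ
  exists_ne a _ b _ hab := by
    obtain ⟨hab, hne⟩ := deleteEdges_adj.1 hab
    obtain ⟨c⟩ := (inferInstance : Nonempty C)
    obtain ⟨φ, hφ, -⟩ := h.exists_isProperOn_deleteEdges hab c
    refine ⟨φ, hφ.mono (by rw [deleteEdges_deleteEdges, Set.union_comm,
      ← deleteEdges_deleteEdges]; exact deleteEdges_le _) subset_rfl, ?_⟩
    exact hφ (Set.mem_univ u) (Set.mem_univ v) (deleteEdges_adj.2 ⟨huv, Ne.symm hne⟩)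

end IsSplittingCritical

end SplittingCritical

section Potential

variable {V U : Type*} {k : ℕ} {G : SimpleGraph V} {K : SimpleGraph U} {f : V → U} {S W : Set V}

/-- The edges of the induced subgraph `G[W]`, as unordered pairs of vertices of `G`. -/
def edgesWithin (G : SimpleGraph V) (W : Set V) : Set (Sym2 V) :=
  {e ∈ G.edgeSet | ∀ v ∈ e, v ∈ W}

theorem mk_mem_edgesWithin {a b : V} :
    s(a, b) ∈ edgesWithin G W ↔ G.Adj a b ∧ a ∈ W ∧ b ∈ W := by
  simp only [edgesWithin, Set.mem_ofPred_eq, mem_edgeSet, Sym2.mem_iff, forall_eq_or_imp,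
    forall_eq]

theorem edgesWithin_image (hadj : ∀ a ∈ S, ∀ b ∈ S, K.Adj (f a) (f b) ↔ G.Adj a b) :
    edgesWithin K (f '' S) = Sym2.map f '' edgesWithin G S := by
  ext e
  constructor
  · induction e with | _ a b
    rintro h
    obtain ⟨hab, ⟨a, ha, rfl⟩, b, hb, rfl⟩ := mk_mem_edgesWithin.1 h
    exact ⟨s(a, b), mk_mem_edgesWithin.2 ⟨(hadj a ha b hb).1 hab, ha, hb⟩, Sym2.map_mk ..⟩
  · rintro ⟨e, he, rfl⟩
    induction e with | _ a b
    obtain ⟨hab, ha, hb⟩ := mk_mem_edgesWithin.1 he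
    exact mk_mem_edgesWithin.2
      ⟨(hadj a ha b hb).2 hab, Set.mem_image_of_mem f ha, Set.mem_image_of_mem f hb⟩

theorem edgesWithin_deleteEdges (e : Sym2 V) :
    edgesWithin (G.deleteEdges {e}) W = edgesWithin G W \ {e} := by
  rw [edgesWithin, edgeSet_deleteEdges]
  ext e'
  exact and_right_comm

theorem edgesWithin_eq_image_edgeSet_induce (G : SimpleGraph V) (W : Set V) :
    edgesWithin G W = Sym2.map Subtype.val '' (G.induce W).edgeSet := by
  have h := edgesWithin_image (G := G.induce W) (K := G) (f := Subtype.val) (S := Set.univ)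
    fun _ _ _ _ => Iff.rfl
  rw [Subtype.coe_image_univ] at h
  rw [h, edgesWithin]
  simp only [Set.mem_univ, implies_true, and_true, Set.ofPred_mem_eq]

theorem ncard_edgesWithin (G : SimpleGraph V) (W : Set V) :
    (edgesWithin G W).ncard = (G.induce W).edgeSet.ncard := by
  rw [edgesWithin_eq_image_edgeSet_induce,
    Set.ncard_image_of_injective _ (Sym2.map.injective Subtype.val_injective)]

theorem ncard_edgesWithin_top [Finite V] (W : Set V) :
    (edgesWithin ⊤ W).ncard = W.ncard.choose 2 := by
  classical
  have := Fintype.ofFinite W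
  rw [ncard_edgesWithin, induce_top, ← coe_edgeFinset, Set.ncard_coe_finset,
    card_edgeFinset_top_eq_card_choose_two, ← Nat.card_eq_fintype_card, Nat.card_coe_set_eq]

theorem three_le_of_nontrivial_fin [Nontrivial (Fin (k - 1))] : 3 ≤ k := by
  have : 2 ≤ k - 1 := Fin.nontrivial_iff_two_le.1 inferInstance
  omega

/-- The `k`-potential `(k + 1)(k - 2)` of a single vertex. -/
def vertexPotential (k : ℕ) : ℤ := (k + 1) * (k - 2)

theorem vertexPotential_pos (hk : 3 ≤ k) : 0 < vertexPotential k := by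
  have : (3 : ℤ) ≤ k := by exact_mod_cast hk
  exact mul_pos (by linarith) (by linarith)

/-- The `k`-potential of a set of vertices. Unlike `potential` it needs no decidability
assumptions; see `potential_eq_setPotential`. -/
noncomputable def setPotential (k : ℕ) (G : SimpleGraph V) (W : Set V) : ℤ :=
  vertexPotential k * W.ncard - 2 * (k - 1) * (edgesWithin G W).ncard

theorem potential_eq_setPotential [Fintype V] [DecidableEq V] [DecidableRel G.Adj]
    (R : Finset V) : potential k G R = setPotential k G R := by
  rw [setPotential, potential, vertexPotential, Set.ncard_coe_finset, ncard_edgesWithin,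
    ← coe_edgeFinset, Set.ncard_coe_finset]

theorem setPotential_image (hf : f.Injective)
    (hadj : ∀ a ∈ S, ∀ b ∈ S, K.Adj (f a) (f b) ↔ G.Adj a b) :
    setPotential k K (f '' S) = setPotential k G S := by
  rw [setPotential, edgesWithin_image hadj, Set.ncard_image_of_injective _ hf,
    Set.ncard_image_of_injective _ (Sym2.map.injective hf), setPotential]

theorem setPotential_deleteEdges_of_mem [Finite V] {x y : V} (hxy : G.Adj x y) (hx : x ∈ W)
    (hy : y ∈ W) :
    setPotential k (G.deleteEdges {s(x, y)}) W = setPotential k G W + 2 * (k - 1) := by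
  have hcard := Set.ncard_sdiff_singleton_add_one (mk_mem_edgesWithin.2 ⟨hxy, hx, hy⟩)
    (Set.toFinite _)
  rw [setPotential, setPotential, edgesWithin_deleteEdges, ← hcard]
  push_cast
  ring

theorem setPotential_deleteEdges_of_notMem {x y : V} (hxy : ¬(x ∈ W ∧ y ∈ W)) :
    setPotential k (G.deleteEdges {s(x, y)}) W = setPotential k G W := by
  rw [setPotential, setPotential, edgesWithin_deleteEdges,
    Set.sdiff_singleton_eq_self fun h => hxy (mk_mem_edgesWithin.1 h).2]

theorem setPotential_top [Finite V] (W : Set V) :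
    setPotential k ⊤ W = vertexPotential k * W.ncard - (k - 1) * (W.ncard * (W.ncard - 1)) := by
  have h : ((W.ncard.choose 2 : ℕ) : ℚ) * 2 = W.ncard * (W.ncard - 1) := by
    rw [Nat.cast_choose_two]
    ring
  have h' : ((W.ncard.choose 2 : ℕ) : ℤ) * 2 = W.ncard * (W.ncard - 1) := by exact_mod_cast h
  rw [setPotential, ncard_edgesWithin_top, ← h']
  ring

end Potential

section Standard

variable {V U : Type*} {k : ℕ} {G : SimpleGraph V} {K : SimpleGraph U} {f : V → U} {S W : Set V}
  {x y : V}

/-- `S` is a standard set whose attachment to the rest of `G` is `{x, y}`. That `{x, y}` separates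
`G` is not required here; it is automatic when `S` is not the whole vertex set. -/
structure IsStandardPair (k : ℕ) (G : SimpleGraph V) (S : Set V) (x y : V) : Prop where
  setPotential_eq : setPotential k G S = vertexPotential k
  ne : x ≠ y
  left_mem : x ∈ S
  right_mem : y ∈ S
  connected : (G.induce (S \ {x, y})).Connected
  closed : ∀ a ∈ S, a ≠ x → a ≠ y → ∀ b, G.Adj a b → b ∈ S
  isQuasi : IsQuasi (Fin (k - 1)) G x y S

/-- `S` is a standard set of `G`, except that `S` may be the whole vertex set. -/
def IsStandard (k : ℕ) (G : SimpleGraph V) (S : Set V) : Prop :=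
  ∃ x y, IsStandardPair k G S x y

theorem IsStandardPair.image (h : IsStandardPair k G S x y) (hf : f.Injective)
    (hadj : ∀ a ∈ S, ∀ b ∈ S, K.Adj (f a) (f b) ↔ G.Adj a b)
    (hclosed : ∀ a ∈ S, a ≠ x → a ≠ y → ∀ u, K.Adj (f a) u → u ∈ f '' S) :
    IsStandardPair k K (f '' S) (f x) (f y) where
  setPotential_eq := (setPotential_image hf hadj).trans h.setPotential_eq
  ne := hf.ne h.ne
  left_mem := Set.mem_image_of_mem f h.left_mem
  right_mem := Set.mem_image_of_mem f h.right_mem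
  connected := by
    rw [← Set.image_pair, ← Set.image_sdiff hf]
    exact connected_induce_image (fun a ha b hb => (hadj a ha.1 b hb.1).2) h.connected
  closed := by
    rintro _ ⟨a, ha, rfl⟩ hax hay
    exact hclosed a ha (fun e => hax (e ▸ rfl)) (fun e => hay (e ▸ rfl))
  isQuasi := h.isQuasi.image hf hadj

/-- `f` embeds `G[S]` as an induced subgraph of `K`, and only the boundary vertices of `S` may have
neighbors outside of the image. This is what the transport of standard sets needs. -/
structure EmbedsOn (G : SimpleGraph V) (K : SimpleGraph U) (f : V → U) (S : Set V) : Prop where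
  injective : f.Injective
  adj_iff : ∀ a ∈ S, ∀ b ∈ S, K.Adj (f a) (f b) ↔ G.Adj a b
  exists_adj_notMem : ∀ a ∈ S, ∀ u, K.Adj (f a) u → u ∉ f '' S → ∃ b ∉ S, G.Adj a b

theorem embedsOn_iso (e : G ≃g K) (S : Set V) : EmbedsOn G K e S where
  injective := e.injective
  adj_iff _ _ _ _ := e.map_adj_iff
  exists_adj_notMem a _ u hau hu := by
    obtain ⟨b, rfl⟩ := e.surjective u
    exact ⟨b, fun hb => hu (Set.mem_image_of_mem e hb), e.map_adj_iff.1 hau⟩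

theorem IsStandard.image (h : IsStandard k G S) (hf : EmbedsOn G K f S) :
    IsStandard k K (f '' S) := by
  obtain ⟨x, y, h⟩ := h
  refine ⟨f x, f y, h.image hf.injective hf.adj_iff fun a ha hax hay u hau => ?_⟩
  by_contra hu
  obtain ⟨b, hb, hab⟩ := hf.exists_adj_notMem a ha u hau hu
  exact hb (h.closed a ha hax hay b hab)

/-- The conclusion of the main theorem for `W`, with the lower bound on the potential that makes it
inductive. -/
structure IsTame (k : ℕ) (G : SimpleGraph V) (W : Set V) : Prop where
  le_setPotential : vertexPotential k ≤ setPotential k G W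
  connected : setPotential k G W ≤ vertexPotential k → (G.induce W).Connected
  exists_isStandard : setPotential k G W ≤ vertexPotential k → W.Nontrivial →
    ∃ S ⊆ W, IsStandard k G S

theorem IsTame.of_lt (h : vertexPotential k < setPotential k G W) : IsTame k G W :=
  ⟨h.le, fun hle => absurd hle h.not_ge, fun hle => absurd hle h.not_ge⟩

theorem IsTame.image (h : IsTame k G W) (hf : ∀ S ⊆ W, EmbedsOn G K f S) :
    IsTame k K (f '' W) := by
  have hW := hf W subset_rfl
  have hpot : setPotential k K (f '' W) = setPotential k G W :=
    setPotential_image hW.injective hW.adj_iff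
  refine ⟨hpot ▸ h.le_setPotential, fun hle => ?_, fun hle hnt => ?_⟩
  · exact connected_induce_image (fun a ha b hb => (hW.adj_iff a ha b hb).2)
      (h.connected (hpot ▸ hle))
  · obtain ⟨S, hSW, hS⟩ := h.exists_isStandard (hpot ▸ hle) (Set.nontrivial_of_image f W hnt)
    exact ⟨f '' S, Set.image_mono hSW, hS.image (hf S hSW)⟩

/-- The properties of `k`-Ore graphs that are proved by induction along DHGO-compositions. -/
structure IsOreLike (k : ℕ) (G : SimpleGraph V) : Prop where
  isSplittingCritical : IsSplittingCritical (Fin (k - 1)) G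
  setPotential_univ : setPotential k G Set.univ = vertexPotential k - 2 * (k - 1)
  isTame : ∀ W : Set V, W.Nonempty → W ≠ Set.univ → IsTame k G W

theorem IsSplittingCritical.of_iso {C : Type*} (h : IsSplittingCritical C G) (e : G ≃g K) :
    IsSplittingCritical C K where
  not_isProperOn φ hφ := h.not_isProperOn (φ ∘ e)
    (hφ.comap (Set.mapsTo_univ _ _) fun _ _ _ _ => e.map_adj_iff.2)
  neighborSet_nontrivial u := by
    refine ((h.neighborSet_nontrivial (e.symm u)).image e.injective).mono ?_
    rintro _ ⟨a, ha, rfl⟩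
    simpa using e.map_adj_iff.2 ha
  exists_avoiding z g u v hzu hzv huv := by
    obtain ⟨φ, hφ, hne⟩ := h.exists_avoiding (e.symm z) (g ∘ e) (e.symm u) (e.symm v)
      (e.symm.map_adj_iff.2 hzu) (e.symm.map_adj_iff.2 hzv) (by simpa using huv)
    refine ⟨φ ∘ e.symm, hφ.comap (fun a ha => ?_) fun _ _ _ _ => e.symm.map_adj_iff.2,
      fun w hzw => ?_⟩
    · exact fun ha' => ha (e.symm.injective ha')
    · simpa using hne (e.symm w) (e.symm.map_adj_iff.2 hzw)

theorem IsOreLike.of_iso (h : IsOreLike k G) (e : G ≃g K) : IsOreLike k K where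
  isSplittingCritical := h.isSplittingCritical.of_iso e
  setPotential_univ := by
    rw [← h.setPotential_univ, ← Set.image_univ_of_surjective e.surjective,
      setPotential_image e.injective fun _ _ _ _ => e.map_adj_iff]
  isTame W hne hW := by
    rw [← Set.image_preimage_eq W e.surjective]
    refine (h.isTame (e ⁻¹' W) (hne.preimage e.surjective) fun hu => hW ?_).image
      fun S _ => embedsOn_iso e S
    rw [← Set.image_preimage_eq W e.surjective, hu, Set.image_univ_of_surjective e.surjective]

theorem IsOreLike.isStandardPair_deleteEdges [Finite V] [Nontrivial (Fin (k - 1))]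
    (h : IsOreLike k G) (hxy : G.Adj x y) :
    IsStandardPair k (G.deleteEdges {s(x, y)}) Set.univ x y where
  setPotential_eq := by
    rw [setPotential_deleteEdges_of_mem hxy (Set.mem_univ x) (Set.mem_univ y), h.setPotential_univ,
      sub_add_cancel]
  ne := hxy.ne
  left_mem := Set.mem_univ x
  right_mem := Set.mem_univ y
  connected := by
    rw [← Set.compl_eq_univ_sdiff]
    have hconn := h.isSplittingCritical.connected_induce_compl_pair (Or.inr hxy)
    rw [← Set.image_id ({x, y}ᶜ : Set V)]
    refine connected_induce_image (fun a ha b _ hab => deleteEdges_adj.2 ⟨hab, fun e => ha ?_⟩)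
      hconn
    exact Sym2.mem_iff.1 ((Set.mem_singleton_iff.1 e) ▸ Sym2.mem_mk_left a b)
  closed _ _ _ _ b _ := Set.mem_univ b
  isQuasi := h.isSplittingCritical.isQuasi_deleteEdges hxy

end Standard

section Complete

variable {k : ℕ}

theorem exists_injective_forall_ne {ι C : Type*} [Fintype ι] [Fintype C]
    (hcard : Fintype.card ι ≤ Fintype.card C) (f : ι → C) {i j : ι} (hij : f i ≠ f j) :
    ∃ g : ι → C, g.Injective ∧ ∀ i, g i ≠ f i := by
  classical
  suffices hall : ∀ s : Finset ι, s.card ≤ (s.biUnion fun i => {f i}ᶜ).card by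
    obtain ⟨g, hg, hgf⟩ := (Finset.all_card_le_biUnion_card_iff_exists_injective _).1 hall
    exact ⟨g, hg, fun i => by simpa using hgf i⟩
  intro s
  by_cases hs : s = Finset.univ
  · have : (Finset.univ.biUnion fun i => ({f i}ᶜ : Finset C)) = Finset.univ := by
      refine Finset.eq_univ_of_forall fun c => ?_
      by_cases hc : c = f i
      · exact Finset.mem_biUnion.2 ⟨j, Finset.mem_univ j, by simpa [hc] using hij⟩
      · exact Finset.mem_biUnion.2 ⟨i, Finset.mem_univ i, by simpa using hc⟩
    rwa [hs, this]
  · obtain rfl | ⟨l, hl⟩ := s.eq_empty_or_nonempty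
    · exact Nat.zero_le _
    · have h₁ := Finset.card_lt_card (Finset.ssubset_univ_iff.2 hs)
      have h₂ := Finset.card_le_card
        (Finset.subset_biUnion_of_mem (fun i => ({f i}ᶜ : Finset C)) hl)
      rw [Finset.card_compl, Finset.card_singleton] at h₂
      rw [Finset.card_univ] at h₁
      omega

theorem isSplittingCritical_top {V C : Type*} [Fintype V] [Fintype C]
    (hcard : Fintype.card V = Fintype.card C + 1) (hV : 3 ≤ Fintype.card V) :
    IsSplittingCritical C (⊤ : SimpleGraph V) where
  not_isProperOn φ hφ := by
    obtain ⟨a, b, hab, h⟩ := Fintype.exists_ne_map_eq_of_card_lt φ (by omega)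
    exact hφ (Set.mem_univ a) (Set.mem_univ b) hab h
  neighborSet_nontrivial z := by
    classical
    have : (Finset.univ.erase z).Nontrivial := by
      rw [← Finset.one_lt_card_iff_nontrivial, Finset.card_erase_of_mem (Finset.mem_univ z),
        Finset.card_univ]
      omega
    obtain ⟨u, hu, v, hv, huv⟩ := this
    exact ⟨u, (Finset.ne_of_mem_erase hu).symm, v, (Finset.ne_of_mem_erase hv).symm, huv⟩
  exists_avoiding z f u v hzu hzv huv := by
    classical
    obtain ⟨g, hg, hgf⟩ := exists_injective_forall_ne (ι := {w : V // w ≠ z})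
      (by simp [Fintype.card_subtype_compl, hcard]) (fun w => f w)
      (i := ⟨u, hzu.ne'⟩) (j := ⟨v, hzv.ne'⟩) huv
    refine ⟨fun w => if hw : w ≠ z then g ⟨w, hw⟩ else f u, fun a ha b hb hab => ?_, fun w hw => ?_⟩
    · have ha' : a ≠ z := ha
      have hb' : b ≠ z := hb
      simpa only [dif_pos ha', dif_pos hb', ne_eq, hg.eq_iff, Subtype.mk.injEq] using hab.ne
    · simpa only [dif_pos (show w ≠ z from hw.ne')] using hgf ⟨w, hw.ne'⟩

theorem isOreLike_top (hk : 4 ≤ k) : IsOreLike k (⊤ : SimpleGraph (Fin k)) where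
  isSplittingCritical := isSplittingCritical_top (by simp; omega) (by simp; omega)
  setPotential_univ := by
    rw [setPotential_top, Set.ncard_univ, Nat.card_fin, vertexPotential]
    ring
  isTame W hne hW := by
    have hk' : (4 : ℤ) ≤ k := by exact_mod_cast hk
    have hpos : (1 : ℤ) ≤ W.ncard := by exact_mod_cast (Set.ncard_pos).2 hne
    have hlt : (W.ncard : ℤ) + 1 ≤ k := by
      exact_mod_cast (Set.ncard_lt_card hW).trans_eq (Nat.card_fin k)
    have hpot : setPotential k ⊤ W - vertexPotential k =
        (W.ncard - 1) * (vertexPotential k - (k - 1) * W.ncard) := by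
      rw [setPotential_top]
      ring
    have hfactor : 0 < vertexPotential k - (k - 1) * W.ncard := by
      rw [vertexPotential]
      nlinarith [hk']
    have hsingleton : setPotential k ⊤ W ≤ vertexPotential k → ∃ v, W = {v} := fun hle => by
      rw [← Set.ncard_eq_one]
      have : (W.ncard : ℤ) ≤ 1 := by
        by_contra! h
        nlinarith [mul_pos (sub_pos.2 h) hfactor]
      omega
    refine ⟨by nlinarith [mul_nonneg (sub_nonneg.2 hpos) hfactor.le], fun hle => ?_,
      fun hle hnt => ?_⟩
    · obtain ⟨v, rfl⟩ := hsingleton hle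
      exact connected_induce_singleton ⊤ v
    · obtain ⟨v, rfl⟩ := hsingleton hle
      exact absurd hnt Set.not_nontrivial_singleton

end Complete

/-- The data of a DHGO-composition of `G₁` and `G₂`: the deleted edge `xy`, the split vertex `z`,
and the set `P` of those neighbors of `z` that become neighbors of `x`. -/
structure Composition {V₁ V₂ : Type*} (G₁ : SimpleGraph V₁) (G₂ : SimpleGraph V₂) where
  x : V₁
  y : V₁
  z : V₂
  P : Set V₂
  adj : G₁.Adj x y
  subset : P ⊆ G₂.neighborSet z
  nonempty : P.Nonempty
  nonempty_compl : (G₂.neighborSet z \ P).Nonempty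

namespace Composition

variable {V₁ V₂ C : Type*} {G₁ : SimpleGraph V₁} {G₂ : SimpleGraph V₂} (D : Composition G₁ G₂)

/-- The composed graph. -/
def graph : SimpleGraph (V₁ ⊕ {w : V₂ // w ≠ D.z}) :=
  dhgoGraph G₁ G₂ D.x D.y D.z D.P

/-- The same composition with the roles of `x` and `y` exchanged. -/
@[reducible]
def swap : Composition G₁ G₂ where
  x := D.y
  y := D.x
  z := D.z
  P := G₂.neighborSet D.z \ D.P
  adj := D.adj.symm
  subset := Set.sdiff_subset
  nonempty := D.nonempty_compl
  nonempty_compl := by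
    rw [Set.sdiff_sdiff_cancel_left D.subset]
    exact D.nonempty

open Classical in
/-- The vertex of `G₁` to which a neighbor `w` of `z` is attached. -/
noncomputable def attach (w : V₂) : V₁ := if w ∈ D.P then D.x else D.y

open Classical in
/-- The vertices of `G₂` inside the composed graph, with `z` placed at the vertex `v` of `G₁`. -/
noncomputable def lift (v : V₁) (w : V₂) : V₁ ⊕ {w : V₂ // w ≠ D.z} :=
  if h : w = D.z then Sum.inl v else Sum.inr ⟨w, h⟩

/-- The contraction of all of `G₁` to `z`. -/
def proj : V₁ ⊕ {w : V₂ // w ≠ D.z} → V₂ :=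
  Sum.elim (fun _ => D.z) Subtype.val

variable {D}

theorem attach_of_mem {w : V₂} (hw : w ∈ D.P) : D.attach w = D.x := if_pos hw

theorem attach_of_notMem {w : V₂} (hw : w ∉ D.P) : D.attach w = D.y := if_neg hw

theorem attach_eq_or_eq (w : V₂) : D.attach w = D.x ∨ D.attach w = D.y := by
  by_cases hw : w ∈ D.P
  exacts [.inl (attach_of_mem hw), .inr (attach_of_notMem hw)]

@[simp]
theorem lift_z (v : V₁) : D.lift v D.z = Sum.inl v := dif_pos rfl

@[simp]
theorem lift_coe (v : V₁) (w : {w : V₂ // w ≠ D.z}) : D.lift v w = Sum.inr w := dif_neg w.2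

theorem proj_inl (a : V₁) : D.proj (Sum.inl a) = D.z := rfl

theorem proj_inr (c : {w : V₂ // w ≠ D.z}) : D.proj (Sum.inr c) = c := rfl

theorem proj_lift (v : V₁) (w : V₂) : D.proj (D.lift v w) = w := by
  by_cases hw : w = D.z
  · rw [hw, lift_z, proj_inl]
  · rw [lift_coe v ⟨w, hw⟩, proj_inr]

theorem lift_injective (v : V₁) : (D.lift v).Injective :=
  Function.LeftInverse.injective (proj_lift v)

section Adj

variable {a b : V₁} {c d : {w : V₂ // w ≠ D.z}}

theorem adj_inl_inl :
    D.graph.Adj (Sum.inl a) (Sum.inl b) ↔ (G₁.deleteEdges {s(D.x, D.y)}).Adj a b := by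
  simp only [graph, dhgoGraph, fromRel_adj, deleteEdges_adj, Set.mem_singleton_iff,
    Sym2.eq_swap (a := b), G₁.adj_comm b a, or_self]
  exact and_iff_right_of_imp fun h => Sum.inl_injective.ne h.1.ne

theorem adj_inl_inr :
    D.graph.Adj (Sum.inl a) (Sum.inr c) ↔ G₂.Adj D.z c ∧ a = D.attach c := by
  simp only [graph, dhgoGraph, fromRel_adj, or_false, and_iff_right Sum.inl_ne_inr,
    Set.mem_sdiff, mem_neighborSet]
  by_cases hc : (c : V₂) ∈ D.P
  · have : G₂.Adj D.z c := D.subset hc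
    simp [attach_of_mem hc, hc, this]
  · simp [attach_of_notMem hc, hc, and_comm]

theorem adj_inr_inr : D.graph.Adj (Sum.inr c) (Sum.inr d) ↔ G₂.Adj c d := by
  simp only [graph, dhgoGraph, fromRel_adj, G₂.adj_comm d c, or_self]
  exact and_iff_right_of_imp fun h => Sum.inr_injective.ne (Subtype.coe_ne_coe.1 h.ne)

end Adj

theorem graph_swap : D.swap.graph = D.graph := by
  have hattach : ∀ c, G₂.Adj D.z c → D.swap.attach c = D.attach c := fun c hc => by
    by_cases hcP : c ∈ D.P
    · exact (attach_of_notMem (D := D.swap) fun h => h.2 hcP).trans (attach_of_mem hcP).symm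
    · exact (attach_of_mem (D := D.swap) ⟨hc, hcP⟩).trans (attach_of_notMem hcP).symm
  have hcross : ∀ a c, D.swap.graph.Adj (Sum.inl a) (Sum.inr c) ↔
      D.graph.Adj (Sum.inl a) (Sum.inr c) := fun a c => by
    rw [adj_inl_inr, adj_inl_inr]
    exact and_congr_right fun hc => by rw [hattach c hc]
  ext (a | c) (b | d)
  · rw [adj_inl_inl, adj_inl_inl, Sym2.eq_swap]
  · exact hcross a d
  · rw [adj_comm, hcross, adj_comm]
  · rw [adj_inr_inr, adj_inr_inr]

theorem neighborSet_inr (c : {w : V₂ // w ≠ D.z}) :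
    D.graph.neighborSet (Sum.inr c) = D.lift (D.attach c) '' G₂.neighborSet c := by
  ext (a | d)
  · rw [mem_neighborSet, adj_comm, adj_inl_inr, G₂.adj_comm]
    constructor
    · rintro ⟨hc, rfl⟩
      exact ⟨D.z, hc, lift_z _⟩
    · rintro ⟨w, hw, hwa⟩
      obtain rfl : w = D.z := by rw [← proj_lift (D.attach c) w, hwa]; rfl
      exact ⟨hw, Sum.inl_injective (hwa.symm.trans (lift_z _))⟩
  · rw [mem_neighborSet, adj_inr_inr]
    constructor
    · exact fun hd => ⟨d, hd, lift_coe _ d⟩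
    · rintro ⟨w, hw, hwd⟩
      obtain rfl : w = d := by rw [← proj_lift (D.attach c) w, hwd]; rfl
      exact hw

theorem adj_lift {a b : V₂} : D.graph.Adj (D.lift D.x a) (D.lift D.x b) ↔
    G₂.Adj a b ∧ (a = D.z → b ∈ D.P) ∧ (b = D.z → a ∈ D.P) := by
  have hx : ∀ c : {w : V₂ // w ≠ D.z},
      D.graph.Adj (Sum.inl D.x) (Sum.inr c) ↔ G₂.Adj D.z c ∧ (c : V₂) ∈ D.P := fun c => by
    rw [adj_inl_inr]
    by_cases hc : (c : V₂) ∈ D.P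
    · simp [attach_of_mem hc, hc]
    · simp [attach_of_notMem hc, hc, D.adj.ne]
  by_cases ha : a = D.z <;> by_cases hb : b = D.z
  · simp [ha, hb]
  · lift b to {w : V₂ // w ≠ D.z} using hb
    simp [ha, hx, b.2]
  · lift a to {w : V₂ // w ≠ D.z} using ha
    simp [hb, adj_comm _ (Sum.inr a), hx, a.2, adj_comm _ D.z]
  · lift a to {w : V₂ // w ≠ D.z} using ha
    lift b to {w : V₂ // w ≠ D.z} using hb
    simp [adj_inr_inr, a.2, b.2]

/-- The edges of the composed graph that come from `G₂`. -/
def rightEdges (D : Composition G₁ G₂) : Set (Sym2 (V₁ ⊕ {w : V₂ // w ≠ D.z})) :=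
  D.graph.edgeSet \ Set.range (Sym2.map Sum.inl)

theorem mk_inr_mem_rightEdges {c : {w : V₂ // w ≠ D.z}} {u : V₁ ⊕ {w : V₂ // w ≠ D.z}}
    (h : D.graph.Adj (Sum.inr c) u) : s(Sum.inr c, u) ∈ D.rightEdges := by
  refine ⟨h, ?_⟩
  rintro ⟨e, he⟩
  have hc : Sum.inr c ∈ Sym2.map Sum.inl e := he ▸ Sym2.mem_mk_left _ _
  obtain ⟨a, -, ha⟩ := Sym2.mem_map.1 hc
  exact Sum.inl_ne_inr ha

theorem mem_rightEdges_iff {e : Sym2 (V₁ ⊕ {w : V₂ // w ≠ D.z})} :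
    e ∈ D.rightEdges ↔ ∃ (c : {w : V₂ // w ≠ D.z}) (w : V₂),
      G₂.Adj c w ∧ s(Sum.inr c, D.lift (D.attach c) w) = e := by
  constructor
  · suffices ∀ c u, D.graph.Adj (Sum.inr c) u → ∃ (c' : {w : V₂ // w ≠ D.z}) (w : V₂),
        G₂.Adj c' w ∧ s(Sum.inr c', D.lift (D.attach c') w) = s(Sum.inr c, u) by
      induction e with | _ a b
      rintro ⟨hab, hrange⟩
      rcases a with a | a
      · rcases b with b | b
        · exact absurd ⟨s(a, b), Sym2.map_mk ..⟩ hrange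
        · rw [Sym2.eq_swap]
          exact this b (Sum.inl a) (adj_symm _ hab)
      · exact this a b hab
    intro c u hu
    obtain ⟨w, hw, rfl⟩ := (neighborSet_inr c).subset hu
    exact ⟨c, w, hw, rfl⟩
  · rintro ⟨c, w, hcw, rfl⟩
    exact mk_inr_mem_rightEdges ((neighborSet_inr c).superset (Set.mem_image_of_mem _ hcw))

theorem injOn_map_proj_rightEdges : D.rightEdges.InjOn (Sym2.map D.proj) := by
  intro e he e' he' h
  obtain ⟨c, w, -, rfl⟩ := mem_rightEdges_iff.1 he
  obtain ⟨c', w', -, rfl⟩ := mem_rightEdges_iff.1 he'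
  rw [Sym2.map_mk, Sym2.map_mk, proj_lift, proj_lift] at h
  obtain ⟨hc, rfl⟩ | ⟨rfl, rfl⟩ := Sym2.eq_iff.1 h
  · obtain rfl : c = c' := Subtype.ext hc
    rfl
  · rw [proj_inr, lift_coe, proj_inr, lift_coe, Sym2.eq_swap]

section Coloring

theorem comap_inl : D.graph.comap Sum.inl = G₁.deleteEdges {s(D.x, D.y)} := by
  ext a b
  exact adj_inl_inl

theorem adj_x_inl {a : V₁} :
    D.graph.Adj (Sum.inl D.x) (Sum.inl a) ↔ G₁.Adj D.x a ∧ a ≠ D.y := by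
  rw [adj_inl_inl, deleteEdges_adj, Set.mem_singleton_iff, Sym2.congr_right]

theorem adj_x_inr {c : {w : V₂ // w ≠ D.z}} :
    D.graph.Adj (Sum.inl D.x) (Sum.inr c) ↔ (c : V₂) ∈ D.P := by
  rw [adj_inl_inr]
  by_cases hc : (c : V₂) ∈ D.P
  · simpa [attach_of_mem hc, hc] using D.subset hc
  · simp [attach_of_notMem hc, hc, D.adj.ne]

theorem isProperOn_sumElim {W : Set (V₁ ⊕ {w : V₂ // w ≠ D.z})} {S : Set V₂} {φ₁ : V₁ → C}
    {φ₂ : V₂ → C} (hφ₁ : IsProperOn (G₁.deleteEdges {s(D.x, D.y)}) (Sum.inl ⁻¹' W) φ₁)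
    (hφ₂ : IsProperOn G₂ S φ₂)
    (hS : ∀ c : {w : V₂ // w ≠ D.z}, Sum.inr c ∈ W → (c : V₂) ∈ S)
    (hcross : ∀ c : {w : V₂ // w ≠ D.z}, Sum.inl (D.attach c) ∈ W → Sum.inr c ∈ W →
      G₂.Adj D.z c → φ₁ (D.attach c) ≠ φ₂ c) :
    IsProperOn D.graph W (Sum.elim φ₁ (φ₂ ∘ Subtype.val)) := by
  refine IsProperOn.sumElim (comap_inl ▸ hφ₁) (hφ₂.comap hS fun _ _ _ _ => adj_inr_inr.1) ?_
  intro a c ha hc hac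
  obtain ⟨hzc, rfl⟩ := adj_inl_inr.1 hac
  exact hcross c ha hc hzc

theorem exists_avoiding_attach (h₂ : IsSplittingCritical C G₂) {φ₁ : V₁ → C}
    (hne : φ₁ D.x ≠ φ₁ D.y) :
    ∃ φ₂ : V₂ → C, IsProperOn G₂ {D.z}ᶜ φ₂ ∧ ∀ w, G₂.Adj D.z w → φ₂ w ≠ φ₁ (D.attach w) := by
  obtain ⟨p, hp⟩ := D.nonempty
  obtain ⟨r, hzr, hr⟩ := D.nonempty_compl
  exact h₂.exists_avoiding D.z (φ₁ ∘ D.attach) p r (D.subset hp) hzr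
    (by simpa only [Function.comp_apply, attach_of_mem hp, attach_of_notMem hr] using hne)

theorem exists_isProperOn_sumElim (h₂ : IsSplittingCritical C G₂)
    {H : SimpleGraph (V₁ ⊕ {w : V₂ // w ≠ D.z})} (hH : H ≤ D.graph)
    {W : Set (V₁ ⊕ {w : V₂ // w ≠ D.z})} {φ₁ : V₁ → C}
    (hφ₁ : IsProperOn (H.comap Sum.inl) (Sum.inl ⁻¹' W) φ₁) (hne : φ₁ D.x ≠ φ₁ D.y) :
    ∃ φ₂, IsProperOn H W (Sum.elim φ₁ φ₂) := by
  obtain ⟨φ₂, hφ₂, hav⟩ := exists_avoiding_attach (D := D) h₂ hne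
  refine ⟨φ₂ ∘ Subtype.val, hφ₁.sumElim
    (hφ₂.comap (fun c _ => c.2) fun _ _ _ _ h => adj_inr_inr.1 (hH h)) fun a c _ _ hac => ?_⟩
  obtain ⟨hzc, rfl⟩ := adj_inl_inr.1 (hH hac)
  exact (hav c hzc).symm

theorem apply_x_ne_apply_y (h₂ : IsSplittingCritical C G₂)
    {W : Set (V₁ ⊕ {w : V₂ // w ≠ D.z})} (hx : Sum.inl D.x ∈ W) (hy : Sum.inl D.y ∈ W)
    (hW : Set.range Sum.inr ⊆ W) {φ : V₁ ⊕ {w : V₂ // w ≠ D.z} → C}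
    (hφ : IsProperOn D.graph W φ) : φ (Sum.inl D.x) ≠ φ (Sum.inl D.y) := by
  intro heq
  have hcross : ∀ c : {w : V₂ // w ≠ D.z}, G₂.Adj D.z c →
      φ (Sum.inl D.x) ≠ φ (Sum.inr c) := fun c hzc => by
    have hne : Sum.inl (D.attach c) ∈ W → φ (Sum.inl (D.attach c)) ≠ φ (Sum.inr c) := fun h =>
      hφ h (hW ⟨c, rfl⟩) (adj_inl_inr.2 ⟨hzc, rfl⟩)
    obtain h | h := attach_eq_or_eq (D := D) (c : V₂) <;> rw [h] at hne
    exacts [hne hx, heq ▸ hne hy]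
  refine h₂.not_isProperOn (φ ∘ D.lift D.x) fun a _ b _ hab => ?_
  by_cases ha : a = D.z
  · subst ha
    lift b to {w : V₂ // w ≠ D.z} using hab.ne'
    simpa using hcross b hab
  · lift a to {w : V₂ // w ≠ D.z} using ha
    by_cases hb : b = D.z
    · subst hb
      simpa using (hcross a hab.symm).symm
    · lift b to {w : V₂ // w ≠ D.z} using hb
      simpa using hφ (hW ⟨a, rfl⟩) (hW ⟨b, rfl⟩) (adj_inr_inr.2 hab)

end Coloring

section SplittingCritical

variable {f : V₁ ⊕ {w : V₂ // w ≠ D.z} → C}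

theorem exists_avoiding_x (h₁ : IsSplittingCritical C G₁) (h₂ : IsSplittingCritical C G₂)
    {u v : V₁ ⊕ {w : V₂ // w ≠ D.z}} (hu : D.graph.Adj (Sum.inl D.x) u)
    (hv : D.graph.Adj (Sum.inl D.x) v) (huv : f u ≠ f v) :
    ∃ φ, IsProperOn D.graph {Sum.inl D.x}ᶜ φ ∧ ∀ w, D.graph.Adj (Sum.inl D.x) w → φ w ≠ f w := by
  classical
  obtain ⟨w, p, hxw, hwy, hp, hwp⟩ : ∃ (w : V₁) (p : {w : V₂ // w ≠ D.z}),
      G₁.Adj D.x w ∧ w ≠ D.y ∧ (p : V₂) ∈ D.P ∧ f (Sum.inl w) ≠ f (Sum.inr p) := by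
    by_contra! hconst
    obtain ⟨w, hxw, hwy⟩ := h₁.exists_adj_ne D.x D.y
    obtain ⟨p, hp⟩ := D.nonempty
    lift p to {w : V₂ // w ≠ D.z} using (D.subset hp : G₂.Adj D.z p).ne'
    have : ∀ u, D.graph.Adj (Sum.inl D.x) u → f u = f (Sum.inr p) := by
      rintro (a | c) ha
      · exact hconst a p (adj_x_inl.1 ha).1 (adj_x_inl.1 ha).2 hp
      · rw [← hconst w p hxw hwy hp, hconst w c hxw hwy (adj_x_inr.1 ha)]
    exact huv ((this u hu).trans (this v hv).symm)
  obtain ⟨φ₁, hφ₁, hav₁⟩ := h₁.exists_avoiding D.x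
    (Function.update (f ∘ Sum.inl) D.y (f (Sum.inr p))) w D.y hxw D.adj
    (by simpa only [Function.update_self, Function.update_of_ne hwy,
      Function.comp_apply] using hwp)
  obtain ⟨r, hzr, hr⟩ := D.nonempty_compl
  obtain ⟨φ₂, hφ₂, hav₂⟩ := h₂.exists_avoiding D.z
    (D.P.piecewise (f ∘ D.lift D.x) fun _ => φ₁ D.y) p r (D.subset hp) hzr
    (by simpa [hp, hr] using (hav₁ D.y D.adj).symm)
  refine ⟨_, isProperOn_sumElim (hφ₁.mono (deleteEdges_le _) fun a ha => ?_) hφ₂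
    (fun c _ => c.2) fun c hc _ hzc => ?_, ?_⟩
  · exact fun hax => ha (congrArg Sum.inl hax)
  · have hcP : (c : V₂) ∉ D.P := fun hcP => hc (congrArg Sum.inl (attach_of_mem hcP))
    simpa [attach_of_notMem hcP, hcP] using (hav₂ c hzc).symm
  · rintro (a | c) ha
    · obtain ⟨hxa, hay⟩ := adj_x_inl.1 ha
      simpa [hay] using hav₁ a hxa
    · have hc := adj_x_inr.1 ha
      simpa [hc] using hav₂ c (D.subset hc)

theorem exists_avoiding_inl (h₁ : IsSplittingCritical C G₁) (h₂ : IsSplittingCritical C G₂)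
    {v : V₁} (hvx : v ≠ D.x) (hvy : v ≠ D.y) {a b : V₁ ⊕ {w : V₂ // w ≠ D.z}}
    (ha : D.graph.Adj (Sum.inl v) a) (hb : D.graph.Adj (Sum.inl v) b) (hab : f a ≠ f b) :
    ∃ φ, IsProperOn D.graph {Sum.inl v}ᶜ φ ∧ ∀ w, D.graph.Adj (Sum.inl v) w → φ w ≠ f w := by
  have hadj : ∀ u, D.graph.Adj (Sum.inl v) u → ∃ w, G₁.Adj v w ∧ Sum.inl w = u := by
    rintro (w | c) hu
    · exact ⟨w, (deleteEdges_adj.1 (adj_inl_inl.1 hu)).1, rfl⟩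
    · obtain h | h := attach_eq_or_eq (D := D) (c : V₂) <;> rw [adj_inl_inr, h] at hu
      exacts [absurd hu.2 hvx, absurd hu.2 hvy]
  obtain ⟨a, hva, rfl⟩ := hadj a ha
  obtain ⟨b, hvb, rfl⟩ := hadj b hb
  obtain ⟨φ₁, hφ₁, hav⟩ := h₁.exists_avoiding v (f ∘ Sum.inl) a b hva hvb hab
  obtain ⟨φ₂, hφ⟩ := exists_isProperOn_sumElim (D := D) (W := {Sum.inl v}ᶜ) h₂ le_rfl
    (hφ₁.mono (comap_inl.trans_le (deleteEdges_le _)) fun a ha h => ha (congrArg Sum.inl h))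
    (hφ₁ hvx.symm hvy.symm D.adj)
  refine ⟨_, hφ, fun u hu => ?_⟩
  obtain ⟨w, hvw, rfl⟩ := hadj u hu
  exact hav w hvw

theorem exists_avoiding_inr [Nontrivial C] (h₁ : IsSplittingCritical C G₁)
    (h₂ : IsSplittingCritical C G₂) {c : {w : V₂ // w ≠ D.z}} {u v : V₁ ⊕ {w : V₂ // w ≠ D.z}}
    (hu : D.graph.Adj (Sum.inr c) u) (hv : D.graph.Adj (Sum.inr c) v) (huv : f u ≠ f v) :
    ∃ φ, IsProperOn D.graph {Sum.inr c}ᶜ φ ∧ ∀ w, D.graph.Adj (Sum.inr c) w → φ w ≠ f w := by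
  have hadj : ∀ u, D.graph.Adj (Sum.inr c) u →
      ∃ w, G₂.Adj c w ∧ D.lift (D.attach c) w = u := fun u hu =>
    (neighborSet_inr c).subset hu
  obtain ⟨u, hcu, rfl⟩ := hadj u hu
  obtain ⟨v, hcv, rfl⟩ := hadj v hv
  obtain ⟨φ₂, hφ₂, hav⟩ := h₂.exists_avoiding c (f ∘ D.lift (D.attach c)) u v hcu hcv huv
  obtain ⟨φ₁, hφ₁, hx, hy⟩ := h₁.exists_isProperOn_deleteEdges D.adj (φ₂ D.z)
  have hattach : ∀ w, φ₁ (D.attach w) = φ₂ D.z := fun w => by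
    obtain h | h := attach_eq_or_eq (D := D) w <;> rw [h]
    exacts [hx, hy]
  have hlift : ∀ w, Sum.elim φ₁ (φ₂ ∘ Subtype.val) (D.lift (D.attach c) w) = φ₂ w := fun w => by
    by_cases hw : w = D.z
    · subst hw
      simpa using hattach c
    · lift w to {w : V₂ // w ≠ D.z} using hw
      simp
  refine ⟨_, isProperOn_sumElim (hφ₁.mono le_rfl (Set.subset_univ _)) hφ₂
    (fun d hd hdc => hd (congrArg Sum.inr (Subtype.ext hdc))) fun d _ hd hzd => ?_, ?_⟩
  · rw [hattach]
    exact hφ₂ c.2.symm (fun hdc => hd (congrArg Sum.inr (Subtype.ext hdc))) hzd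
  · intro u hu
    obtain ⟨w, hcw, rfl⟩ := hadj u hu
    rw [hlift]
    exact hav w hcw

theorem neighborSet_x_nontrivial (h₁ : IsSplittingCritical C G₁) :
    (D.graph.neighborSet (Sum.inl D.x)).Nontrivial := by
  obtain ⟨w, hxw, hwy⟩ := h₁.exists_adj_ne D.x D.y
  obtain ⟨p, hp⟩ := D.nonempty
  lift p to {w : V₂ // w ≠ D.z} using (D.subset hp : G₂.Adj D.z p).ne'
  exact ⟨Sum.inl w, adj_x_inl.2 ⟨hxw, hwy⟩, Sum.inr p, adj_x_inr.2 hp, Sum.inl_ne_inr⟩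

theorem isSplittingCritical [Nontrivial C] (h₁ : IsSplittingCritical C G₁)
    (h₂ : IsSplittingCritical C G₂) : IsSplittingCritical C D.graph where
  not_isProperOn φ hφ := by
    refine apply_x_ne_apply_y h₂ (Set.mem_univ _) (Set.mem_univ _) (Set.subset_univ _) hφ
      (h₁.apply_eq_of_isProperOn_deleteEdges (φ := φ ∘ Sum.inl) ?_)
    exact hφ.comap (Set.mapsTo_univ _ _) fun _ _ _ _ => adj_inl_inl.2
  neighborSet_nontrivial := by
    rintro (v | c)
    · by_cases hvx : v = D.x
      · exact hvx ▸ neighborSet_x_nontrivial h₁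
      by_cases hvy : v = D.y
      · exact hvy ▸ graph_swap (D := D) ▸ neighborSet_x_nontrivial (D := D.swap) h₁
      refine ((h₁.neighborSet_nontrivial v).image Sum.inl_injective).mono ?_
      rintro _ ⟨w, hvw, rfl⟩
      refine adj_inl_inl.2 (deleteEdges_adj.2 ⟨hvw, fun he => ?_⟩)
      have hv := Sym2.mem_iff.1 (Set.mem_singleton_iff.1 he ▸ Sym2.mem_mk_left v w)
      exact hv.elim hvx hvy
    · rw [neighborSet_inr]
      exact (h₂.neighborSet_nontrivial c).image (lift_injective _)
  exists_avoiding := by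
    rintro (v | c) f a b ha hb hab
    · by_cases hvx : v = D.x
      · subst hvx
        exact exists_avoiding_x h₁ h₂ ha hb hab
      by_cases hvy : v = D.y
      · subst hvy
        rw [← graph_swap] at ha hb ⊢
        exact exists_avoiding_x (D := D.swap) h₁ h₂ ha hb hab
      exact exists_avoiding_inl h₁ h₂ hvx hvy ha hb hab
    · exact exists_avoiding_inr h₁ h₂ ha hb hab

end SplittingCritical

section Potential

variable {k : ℕ} {W : Set (V₁ ⊕ {w : V₂ // w ≠ D.z})}

/-- The neighbors `b` of `z` for which the edge `zb` of `G₂` has both ends in `W` when `z` is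
placed at `x`, although the edge `yb` of the composed graph that comes from it leaves `W`. -/
def lostNeighbors (D : Composition G₁ G₂) (W : Set (V₁ ⊕ {w : V₂ // w ≠ D.z})) : Set V₂ :=
  {b ∈ G₂.neighborSet D.z \ D.P |
    Sum.inl D.x ∈ W ∧ Sum.inl D.y ∉ W ∧ D.lift D.x b ∈ W}

theorem edgesWithin_inter_range_map_inl :
    edgesWithin D.graph W ∩ Set.range (Sym2.map Sum.inl) =
      Sym2.map Sum.inl '' edgesWithin (G₁.deleteEdges {s(D.x, D.y)}) (Sum.inl ⁻¹' W) := by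
  rw [← Set.image_preimage_eq_inter_range]
  congr 1
  ext e
  induction e with | _ a b
  rw [Set.mem_preimage, Sym2.map_mk, mk_mem_edgesWithin, mk_mem_edgesWithin, adj_inl_inl,
    Set.mem_preimage, Set.mem_preimage]

theorem mem_image_proj_or_mem_lostNeighbors {c : {w : V₂ // w ≠ D.z}} {w : V₂}
    (hcw : G₂.Adj c w) (hc : Sum.inr c ∈ W) (hw : D.lift D.x w ∈ W) :
    s(↑c, w) ∈ Sym2.map D.proj '' (edgesWithin D.graph W ∩ D.rightEdges) ∨
      ↑c ∈ D.lostNeighbors W ∧ w = D.z := by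
  by_cases hcw' : D.lift (D.attach c) w ∈ W
  · have hadj := (neighborSet_inr c).superset (Set.mem_image_of_mem (D.lift _) hcw)
    refine .inl ⟨_, ⟨mk_mem_edgesWithin.2 ⟨hadj, hc, hcw'⟩, mk_inr_mem_rightEdges hadj⟩, ?_⟩
    rw [Sym2.map_mk, proj_inr, proj_lift]
  · obtain rfl : w = D.z := by
      by_contra hwz
      lift w to {w : V₂ // w ≠ D.z} using hwz
      rw [lift_coe] at hw hcw'
      exact hcw' hw
    rw [lift_z] at hw hcw'
    have hcP : (c : V₂) ∉ D.P := fun hcP => hcw' (attach_of_mem hcP ▸ hw)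
    rw [attach_of_notMem hcP] at hcw'
    exact .inr ⟨⟨⟨hcw.symm, hcP⟩, hw, hcw', (lift_coe D.x c).symm ▸ hc⟩, rfl⟩

theorem edgesWithin_preimage_lift (hyx : Sum.inl D.y ∈ W → Sum.inl D.x ∈ W) :
    edgesWithin G₂ (D.lift D.x ⁻¹' W) =
      Sym2.map D.proj '' (edgesWithin D.graph W ∩ D.rightEdges) ∪
        (fun b => s(D.z, b)) '' D.lostNeighbors W := by
  refine Set.Subset.antisymm (fun e he => ?_) (Set.union_subset ?_ ?_)
  · suffices ∀ (c : {w : V₂ // w ≠ D.z}) (w : V₂),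
        s(↑c, w) ∈ edgesWithin G₂ (D.lift D.x ⁻¹' W) → s(↑c, w) ∈
          Sym2.map D.proj '' (edgesWithin D.graph W ∩ D.rightEdges) ∪
            (fun b => s(D.z, b)) '' D.lostNeighbors W by
      induction e with | _ a b
      by_cases ha : a = D.z
      · rw [Sym2.eq_swap] at he ⊢
        exact this ⟨b, fun hb => (mk_mem_edgesWithin.1 he).1.ne (hb.trans ha.symm)⟩ a he
      · exact this ⟨a, ha⟩ b he
    intro c w h
    obtain ⟨hcw, hc, hw⟩ := mk_mem_edgesWithin.1 h
    refine (mem_image_proj_or_mem_lostNeighbors hcw (lift_coe D.x c ▸ hc) hw).imp_right ?_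
    rintro ⟨hc, rfl⟩
    exact ⟨c, hc, Sym2.eq_swap⟩
  · rintro _ ⟨e, ⟨he, he'⟩, rfl⟩
    obtain ⟨c, w, hcw, rfl⟩ := mem_rightEdges_iff.1 he'
    obtain ⟨-, hc, hw⟩ := mk_mem_edgesWithin.1 he
    rw [Sym2.map_mk, proj_inr, proj_lift]
    refine mk_mem_edgesWithin.2 ⟨hcw, by rwa [Set.mem_preimage, lift_coe], ?_⟩
    by_cases hwz : w = D.z
    · rw [hwz, lift_z] at hw
      rw [Set.mem_preimage, hwz, lift_z]
      obtain h | h := attach_eq_or_eq (D := D) (c : V₂) <;> rw [h] at hw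
      exacts [hw, hyx hw]
    · rw [lift_coe _ ⟨w, hwz⟩] at hw
      rwa [Set.mem_preimage, lift_coe _ ⟨w, hwz⟩]
  · rintro _ ⟨b, ⟨⟨hzb, -⟩, hx, -, hb⟩, rfl⟩
    exact mk_mem_edgesWithin.2 ⟨hzb, by rwa [Set.mem_preimage, lift_z], hb⟩

theorem disjoint_image_proj_lostNeighbors :
    Disjoint (Sym2.map D.proj '' (edgesWithin D.graph W ∩ D.rightEdges))
      ((fun b => s(D.z, b)) '' D.lostNeighbors W) := by
  rw [Set.disjoint_left]
  rintro _ ⟨e, ⟨he, he'⟩, rfl⟩ ⟨b, ⟨⟨-, hbP⟩, -, hy, -⟩, hb⟩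
  obtain ⟨c, w, -, rfl⟩ := mem_rightEdges_iff.1 he'
  rw [Sym2.map_mk, proj_inr, proj_lift] at hb
  obtain ⟨hzc, -⟩ | ⟨rfl, rfl⟩ := Sym2.eq_iff.1 hb
  · exact c.2 hzc.symm
  · have := (mk_mem_edgesWithin.1 he).2.2
    rw [lift_z, attach_of_notMem hbP] at this
    exact hy this

variable [Finite V₁] [Finite V₂]

theorem ncard_edgesWithin_add_ncard_lostNeighbors
    (hyx : Sum.inl D.y ∈ W → Sum.inl D.x ∈ W) :
    (edgesWithin D.graph W).ncard + (D.lostNeighbors W).ncard =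
      (edgesWithin (G₁.deleteEdges {s(D.x, D.y)}) (Sum.inl ⁻¹' W)).ncard +
        (edgesWithin G₂ (D.lift D.x ⁻¹' W)).ncard := by
  have hright : edgesWithin D.graph W \ Set.range (Sym2.map Sum.inl) =
      edgesWithin D.graph W ∩ D.rightEdges := by
    rw [rightEdges, ← Set.inter_sdiff_assoc, Set.inter_eq_left.2 fun e he => he.1]
  rw [edgesWithin_preimage_lift hyx, Set.ncard_union_eq disjoint_image_proj_lostNeighbors,
    Set.ncard_image_of_injective _ fun _ _ => Sym2.congr_right.1,
    (injOn_map_proj_rightEdges.mono Set.inter_subset_right).ncard_image, ← hright, ← add_assoc,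
    ← Set.ncard_inter_add_ncard_sdiff_eq_ncard (edgesWithin D.graph W)
      (Set.range (Sym2.map Sum.inl)), edgesWithin_inter_range_map_inl,
    Set.ncard_image_of_injective _ (Sym2.map.injective Sum.inl_injective)]

theorem ncard_eq_add : W.ncard =
    (Sum.inl ⁻¹' W : Set V₁).ncard + ((D.lift D.x ⁻¹' W) \ {D.z}).ncard := by
  have hright : W \ Set.range Sum.inl = D.lift D.x '' ((D.lift D.x ⁻¹' W) \ {D.z}) := by
    ext (a | c)
    · refine iff_of_false (fun h => h.2 ⟨a, rfl⟩) ?_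
      rintro ⟨w, ⟨-, hw⟩, h⟩
      rw [lift_coe _ ⟨w, hw⟩] at h
      exact Sum.inr_ne_inl h
    · rw [← lift_coe D.x c, (lift_injective _).mem_set_image]
      simp [c.2]
  rw [← Set.ncard_inter_add_ncard_sdiff_eq_ncard W (Set.range Sum.inl), hright,
    ← Set.image_preimage_eq_inter_range, Set.ncard_image_of_injective _ Sum.inl_injective,
    Set.ncard_image_of_injective _ (lift_injective _)]

theorem setPotential_of_notMem (hx : Sum.inl D.x ∉ W) (hy : Sum.inl D.y ∉ W) :
    setPotential k D.graph W =
      setPotential k G₁ (Sum.inl ⁻¹' W) + setPotential k G₂ (D.lift D.x ⁻¹' W) := by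
  have hedges := ncard_edgesWithin_add_ncard_lostNeighbors fun h => absurd h hy
  have hlost : D.lostNeighbors W = ∅ := Set.eq_empty_of_forall_notMem fun b hb => hx hb.2.1
  have hcard := ncard_eq_add (W := W)
  rw [Set.sdiff_singleton_eq_self (by rwa [Set.mem_preimage, lift_z])] at hcard
  rw [hlost, Set.ncard_empty, add_zero] at hedges
  rw [← setPotential_deleteEdges_of_notMem (x := D.x) (y := D.y) fun h => hx h.1]
  simp only [setPotential, hcard, hedges]
  push_cast
  ring

theorem setPotential_of_mem (hx : Sum.inl D.x ∈ W) :
    setPotential k D.graph W + vertexPotential k =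
      setPotential k (G₁.deleteEdges {s(D.x, D.y)}) (Sum.inl ⁻¹' W) +
        setPotential k G₂ (D.lift D.x ⁻¹' W) + 2 * (k - 1) * (D.lostNeighbors W).ncard := by
  have hedges := ncard_edgesWithin_add_ncard_lostNeighbors fun _ => hx
  have hcard := ncard_eq_add (W := W)
  have hz : D.z ∈ D.lift D.x ⁻¹' W := by rwa [Set.mem_preimage, lift_z]
  have hz' := Set.ncard_sdiff_singleton_add_one hz (Set.toFinite _)
  simp only [setPotential, hcard, ← hz']
  zify at hedges
  push_cast
  linear_combination (-2 * ((k : ℤ) - 1)) * hedges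

end Potential

section Connectivity

variable {W : Set (V₁ ⊕ {w : V₂ // w ≠ D.z})}

theorem adj_proj {c : {w : V₂ // w ≠ D.z}} {u : V₁ ⊕ {w : V₂ // w ≠ D.z}}
    (hu : D.graph.Adj (Sum.inr c) u) : G₂.Adj c (D.proj u) := by
  obtain ⟨w, hw, rfl⟩ := (neighborSet_inr c).subset hu
  rwa [proj_lift]

theorem exists_adj_inr {v : V₁} (hv : v = D.x ∨ v = D.y) :
    ∃ c, D.graph.Adj (Sum.inl v) (Sum.inr c) := by
  obtain rfl | rfl := hv
  · obtain ⟨p, hp⟩ := D.nonempty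
    lift p to {w : V₂ // w ≠ D.z} using (D.subset hp : G₂.Adj D.z p).ne'
    exact ⟨p, adj_x_inr.2 hp⟩
  · obtain ⟨r, hzr, hr⟩ := D.nonempty_compl
    lift r to {w : V₂ // w ≠ D.z} using (show G₂.Adj D.z r from hzr).ne'
    exact ⟨r, adj_inl_inr.2 ⟨hzr, (attach_of_notMem hr).symm⟩⟩

theorem connected_induce_range_inr [Nontrivial C] (h₂ : IsSplittingCritical C G₂) :
    (D.graph.induce (Set.range Sum.inr)).Connected := by
  have himage : D.lift D.x '' {D.z}ᶜ = Set.range Sum.inr := by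
    refine Set.Subset.antisymm ?_ ?_
    · rintro _ ⟨w, hw, rfl⟩
      exact ⟨⟨w, hw⟩, (lift_coe _ ⟨w, hw⟩).symm⟩
    · rintro _ ⟨c, rfl⟩
      exact ⟨c, c.2, lift_coe _ c⟩
  rw [← himage]
  exact connected_induce_image (fun a ha b hb hab => adj_lift.2
    ⟨hab, fun h => absurd h ha, fun h => absurd h hb⟩) (h₂.connected_induce_compl_singleton D.z)

theorem connected_induce_of_range_inr_subset [Nontrivial C] (h₂ : IsSplittingCritical C G₂)
    (hW : Set.range Sum.inr ⊆ W) (hconn : (G₁.induce (Sum.inl ⁻¹' W)).Connected)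
    (hxy : Sum.inl D.x ∈ W ∨ Sum.inl D.y ∈ W) : (D.graph.induce W).Connected := by
  obtain ⟨c, -⟩ := exists_adj_inr (D := D) (.inl rfl)
  refine connected_induce_of_isClosedIn (hW ⟨c, rfl⟩) fun A hcA hA => ?_
  have hright : Set.range Sum.inr ⊆ A := subset_of_isClosedIn (connected_induce_range_inr h₂)
    (fun a ha haA b hb hab => hA a (hW ha) haA b (hW hb) hab) ⟨_, ⟨c, rfl⟩, hcA⟩
  have hmem : ∀ v, v = D.x ∨ v = D.y → Sum.inl v ∈ W → Sum.inl v ∈ A := fun v hv hvW => by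
    obtain ⟨d, hd⟩ := exists_adj_inr hv
    exact hA _ (hW ⟨d, rfl⟩) (hright ⟨d, rfl⟩) _ hvW hd.symm
  have hleft : Sum.inl ⁻¹' W ⊆ Sum.inl ⁻¹' A := by
    refine subset_of_isClosedIn hconn (fun a ha haA b hb hab => ?_) ?_
    · by_cases he : s(a, b) = s(D.x, D.y)
      · exact hmem b (Sym2.mem_iff.1 (he ▸ Sym2.mem_mk_right a b)) hb
      · exact hA _ ha haA _ hb (adj_inl_inl.2 (deleteEdges_adj.2 ⟨hab, he⟩))
    · exact hxy.elim (fun h => ⟨D.x, h, hmem _ (.inl rfl) h⟩)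
        fun h => ⟨D.y, h, hmem _ (.inr rfl) h⟩
  rintro (a | d) hu
  exacts [hleft hu, hright ⟨d, rfl⟩]

theorem connected_induce_of_lostNeighbors_eq_empty (hx : Sum.inl D.x ∈ W)
    (hlost : D.lostNeighbors W = ∅)
    (h₁ : ((G₁.deleteEdges {s(D.x, D.y)}).induce (Sum.inl ⁻¹' W)).Connected)
    (h₂ : (G₂.induce (D.lift D.x ⁻¹' W)).Connected) : (D.graph.induce W).Connected := by
  refine connected_induce_of_isClosedIn hx fun A hxA hA => ?_
  have hleft : Sum.inl ⁻¹' W ⊆ Sum.inl ⁻¹' A := subset_of_isClosedIn h₁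
    (fun a ha haA b hb hab => hA _ ha haA _ hb (adj_inl_inl.2 hab)) ⟨D.x, hx, hxA⟩
  have hright : D.lift D.x ⁻¹' W ⊆ D.lift D.x ⁻¹' A := by
    refine subset_of_isClosedIn h₂ (fun a ha haA b hb hab => ?_) ⟨D.z, ?_, ?_⟩
    · by_cases hbz : b = D.z
      · rwa [Set.mem_preimage, hbz, lift_z]
      by_cases hlost_b : a = D.z ∧ b ∉ D.P
      · obtain ⟨rfl, hbP⟩ := hlost_b
        have hy : Sum.inl D.y ∈ W := by
          by_contra hy
          exact hlost.subset ⟨⟨hab, hbP⟩, hx, hy, hb⟩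
        lift b to {w : V₂ // w ≠ D.z} using hbz
        rw [Set.mem_preimage, lift_coe] at hb ⊢
        exact hA _ hy (hleft hy) _ hb (adj_inl_inr.2 ⟨hab, (attach_of_notMem hbP).symm⟩)
      · exact hA _ ha haA _ hb (adj_lift.2
          ⟨hab, fun h => by_contra fun h' => hlost_b ⟨h, h'⟩, fun h => absurd h hbz⟩)
    all_goals rwa [Set.mem_preimage, lift_z]
  rintro (a | c) hu
  · exact hleft hu
  · rw [← lift_coe D.x c] at hu ⊢
    exact hright hu

end Connectivity

section Standard

variable {k : ℕ} {S : Set V₁}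

theorem embedsOn_inl (hS : ¬(D.x ∈ S ∧ D.y ∈ S)) : EmbedsOn G₁ D.graph Sum.inl S where
  injective := Sum.inl_injective
  adj_iff a ha b hb := by
    rw [adj_inl_inl, deleteEdges_adj, and_iff_left]
    intro he
    obtain ⟨rfl, rfl⟩ | ⟨rfl, rfl⟩ := Sym2.eq_iff.1 he
    exacts [hS ⟨ha, hb⟩, hS ⟨hb, ha⟩]
  exists_adj_notMem a ha u hau hu := by
    obtain b | c := u
    · exact ⟨b, fun hb => hu ⟨b, hb, rfl⟩, (deleteEdges_adj.1 (adj_inl_inl.1 hau)).1⟩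
    · obtain ⟨-, rfl⟩ := adj_inl_inr.1 hau
      obtain h | h := attach_eq_or_eq (D := D) (c : V₂) <;> rw [h] at ha ⊢
      exacts [⟨D.y, fun hy => hS ⟨ha, hy⟩, D.adj⟩, ⟨D.x, fun hx => hS ⟨hx, ha⟩, D.adj.symm⟩]

theorem embedsOn_lift {S : Set V₂} (hS : D.z ∈ S → Disjoint S (G₂.neighborSet D.z \ D.P)) :
    EmbedsOn G₂ D.graph (D.lift D.x) S where
  injective := lift_injective D.x
  adj_iff a ha b hb := by
    have hP : D.z ∈ S → ∀ w ∈ S, G₂.Adj D.z w → w ∈ D.P := fun hz w hw hzw =>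
      by_contra fun hwP => Set.disjoint_left.1 (hS hz) hw ⟨hzw, hwP⟩
    rw [adj_lift, and_iff_left_iff_imp]
    intro hab
    constructor
    · rintro rfl
      exact hP ha b hb hab
    · rintro rfl
      exact hP hb a ha hab.symm
  exists_adj_notMem a ha u hau hu := by
    by_cases haz : a = D.z
    · subst haz
      obtain ⟨r, hr⟩ := D.nonempty_compl
      exact ⟨r, fun hrS => Set.disjoint_left.1 (hS ha) hrS hr, hr.1⟩
    lift a to {w : V₂ // w ≠ D.z} using haz
    rw [lift_coe] at hau
    obtain ⟨w, haw, rfl⟩ := (neighborSet_inr a).subset hau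
    refine ⟨w, fun hw => hu ?_, haw⟩
    suffices D.lift (D.attach a) w = D.lift D.x w from this ▸ Set.mem_image_of_mem _ hw
    by_cases hwz : w = D.z
    · subst hwz
      rw [attach_of_mem]
      by_contra haP
      exact Set.disjoint_left.1 (hS hw) ha ⟨adj_symm _ haw, haP⟩
    · rw [lift_coe _ ⟨w, hwz⟩, lift_coe _ ⟨w, hwz⟩]

variable [Nontrivial (Fin (k - 1))]

theorem isStandard_range_inl [Finite V₁] (h₁ : IsOreLike k G₁) :
    IsStandard k D.graph (Set.range Sum.inl) := by
  rw [← Set.image_univ]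
  refine ⟨_, _, (h₁.isStandardPair_deleteEdges D.adj).image Sum.inl_injective
    (fun _ _ _ _ => adj_inl_inl) ?_⟩
  rintro a - hax hay (b | c) hau
  · exact ⟨b, Set.mem_univ b, rfl⟩
  · obtain ⟨-, rfl⟩ := adj_inl_inr.1 hau
    exact ((attach_eq_or_eq (D := D) (c : V₂)).elim hax hay).elim

theorem isStandard_range_lift [Finite V₂] (h₂ : IsOreLike k G₂) {r : V₂}
    (hr : G₂.neighborSet D.z \ D.P = {r}) : IsStandard k D.graph (Set.range (D.lift D.x)) := by
  obtain ⟨hzr, hrP⟩ := hr.superset rfl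
  have hP : ∀ w, G₂.Adj D.z w → (w ∈ D.P ↔ w ≠ r) := fun w hw =>
    ⟨fun hwP hwr => hrP (hwr ▸ hwP), fun hwr => by_contra fun hwP => hwr (hr.subset ⟨hw, hwP⟩)⟩
  rw [← Set.image_univ]
  refine ⟨_, _, (h₂.isStandardPair_deleteEdges hzr).image (lift_injective D.x)
    (fun a _ b _ => ?_) fun a _ haz har u hau => ?_⟩
  · rw [adj_lift, deleteEdges_adj, Set.mem_singleton_iff, Sym2.eq_iff, not_or, not_and, not_and']
    refine and_congr_right fun hab => and_congr (forall_congr' ?_) (forall_congr' ?_)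
    · rintro rfl
      exact hP b hab
    · rintro rfl
      exact hP a hab.symm
  · lift a to {w : V₂ // w ≠ D.z} using haz
    rw [lift_coe] at hau
    obtain ⟨w, haw, rfl⟩ := (neighborSet_inr a).subset hau
    refine ⟨w, Set.mem_univ w, ?_⟩
    by_cases hwz : w = D.z
    · subst hwz
      rw [attach_of_mem ((hP a (adj_symm _ haw)).2 har)]
    · rw [lift_coe _ ⟨w, hwz⟩, lift_coe _ ⟨w, hwz⟩]

end Standard

section Extension

variable {k : ℕ} {S : Set V₁} {s t : V₁}

/-- The vertices of the composed graph that lie in `S` or come from `G₂`. -/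
def extension (D : Composition G₁ G₂) (S : Set V₁) : Set (V₁ ⊕ {w : V₂ // w ≠ D.z}) :=
  Sum.inl '' S ∪ Set.range Sum.inr

theorem inl_mem_extension {a : V₁} : Sum.inl a ∈ D.extension S ↔ a ∈ S := by
  simp [extension]

theorem inr_mem_extension (c : {w : V₂ // w ≠ D.z}) : Sum.inr c ∈ D.extension S :=
  .inr ⟨c, rfl⟩

theorem preimage_inl_extension : Sum.inl ⁻¹' D.extension S = S :=
  Set.ext fun _ => inl_mem_extension

theorem preimage_lift_extension (hx : D.x ∈ S) : D.lift D.x ⁻¹' D.extension S = Set.univ := by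
  refine Set.eq_univ_of_forall fun w => ?_
  by_cases hw : w = D.z
  · subst hw
    rwa [Set.mem_preimage, lift_z, inl_mem_extension]
  · rw [Set.mem_preimage, lift_coe _ ⟨w, hw⟩]
    exact inr_mem_extension _

theorem exists_isProperOn_extension_deleteEdges [Nontrivial C] (h₂ : IsSplittingCritical C G₂)
    {φ₁ : V₁ → C} (hφ₁ : IsProperOn (G₁.deleteEdges {s(D.x, D.y)}) S φ₁)
    (hxy : φ₁ D.x = φ₁ D.y) {c : {w : V₂ // w ≠ D.z}} {u : V₁ ⊕ {w : V₂ // w ≠ D.z}}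
    (hcu : D.graph.Adj (Sum.inr c) u) :
    ∃ φ₂, IsProperOn (D.graph.deleteEdges {s(Sum.inr c, u)}) (D.extension S)
      (Sum.elim φ₁ φ₂) := by
  classical
  obtain ⟨ψ, hψ, -⟩ := h₂.exists_isProperOn_deleteEdges (adj_proj hcu) (φ₁ D.x)
  set π : Equiv.Perm C := Equiv.swap (ψ D.z) (φ₁ D.x)
  have hadj : ∀ d v, (D.graph.deleteEdges {s(Sum.inr c, u)}).Adj (Sum.inr d) v →
      π (ψ d) ≠ π (ψ (D.proj v)) := fun d v hdv => by
    obtain ⟨hdv, hne⟩ := deleteEdges_adj.1 hdv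
    refine π.injective.ne (hψ (Set.mem_univ _) (Set.mem_univ _)
      (deleteEdges_adj.2 ⟨adj_proj hdv, fun he => hne ?_⟩))
    exact injOn_map_proj_rightEdges (mk_inr_mem_rightEdges hdv) (mk_inr_mem_rightEdges hcu) he
  refine ⟨fun d => π (ψ d), IsProperOn.sumElim (hφ₁.mono ?_ preimage_inl_extension.subset)
    (fun a _ b _ hab => hadj a (Sum.inr b) hab) fun a d _ _ had => ?_⟩
  · exact fun a b hab => adj_inl_inl.1 (deleteEdges_adj.1 hab).1
  · obtain ⟨-, rfl⟩ := adj_inl_inr.1 (deleteEdges_adj.1 had).1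
    have hφ : φ₁ (D.attach d) = π (ψ D.z) := by
      rw [Equiv.swap_apply_left]
      obtain h | h := attach_eq_or_eq (D := D) (d : V₂) <;> rw [h]
      exact hxy.symm
    exact hφ ▸ (hadj d _ had.symm).symm

theorem isQuasi_extension [Nontrivial C] (h₂ : IsSplittingCritical C G₂)
    (hS : IsQuasi C G₁ s t S) (hx : D.x ∈ S) (hy : D.y ∈ S) :
    IsQuasi C D.graph (Sum.inl s) (Sum.inl t) (D.extension S) where
  exists_isProperOn := by
    obtain ⟨φ₁, hφ₁⟩ := hS.exists_isProperOn
    obtain ⟨φ₂, hφ⟩ := exists_isProperOn_sumElim (D := D) (W := D.extension S) h₂ le_rfl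
      (hφ₁.mono (comap_inl.trans_le (deleteEdges_le _)) preimage_inl_extension.subset)
      (hφ₁ hx hy D.adj)
    exact ⟨_, hφ⟩
  eq_of_isProperOn φ hφ := by
    refine hS.eq_of_isProperOn (φ ∘ Sum.inl) (IsProperOn.of_deleteEdges (u := D.x) (v := D.y)
      (hφ.comap (fun a ha => inl_mem_extension.2 ha) fun _ _ _ _ => adj_inl_inl.2) ?_)
    exact apply_x_ne_apply_y h₂ (inl_mem_extension.2 hx) (inl_mem_extension.2 hy)
      Set.subset_union_right hφ
  exists_ne := by
    have right : ∀ c u, D.graph.Adj (Sum.inr c) u → ∃ φ, IsProperOn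
        (D.graph.deleteEdges {s(Sum.inr c, u)}) (D.extension S) φ ∧
          φ (Sum.inl s) ≠ φ (Sum.inl t) := fun c u hcu => by
      obtain ⟨φ₁, hφ₁, hst⟩ := hS.exists_ne D.x hx D.y hy D.adj
      have hxy : φ₁ D.x = φ₁ D.y := not_not.1 fun hne =>
        hst (hS.eq_of_isProperOn φ₁ (hφ₁.of_deleteEdges hne))
      obtain ⟨φ₂, hφ⟩ := exists_isProperOn_extension_deleteEdges h₂ hφ₁ hxy hcu
      exact ⟨_, hφ, hst⟩
    rintro (a | c) ha (b | d) hb hab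
    · obtain ⟨hab, hne⟩ := deleteEdges_adj.1 (adj_inl_inl.1 hab)
      obtain ⟨φ₁, hφ₁, hst⟩ := hS.exists_ne a (inl_mem_extension.1 ha) b
        (inl_mem_extension.1 hb) hab
      have hxy := hφ₁ hx hy (deleteEdges_adj.2 ⟨D.adj, Ne.symm hne⟩)
      have hle : (D.graph.deleteEdges {s(Sum.inl a, Sum.inl b)}).comap Sum.inl ≤
          G₁.deleteEdges {s(a, b)} := fun v w hvw => by
        obtain ⟨hvw, hne⟩ := deleteEdges_adj.1 hvw
        refine deleteEdges_adj.2 ⟨(deleteEdges_adj.1 (adj_inl_inl.1 hvw)).1, fun he => hne ?_⟩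
        exact congrArg (Sym2.map Sum.inl) (Set.mem_singleton_iff.1 he)
      obtain ⟨φ₂, hφ⟩ := exists_isProperOn_sumElim h₂ (deleteEdges_le _)
        (hφ₁.mono hle preimage_inl_extension.subset) hxy
      exact ⟨_, hφ, hst⟩
    · rw [Sym2.eq_swap]
      exact right d _ hab.symm
    all_goals exact right c _ hab

variable [Finite V₁] [Finite V₂]

theorem setPotential_extension (h₂ : setPotential k G₂ Set.univ = vertexPotential k - 2 * (k - 1))
    (hx : D.x ∈ S) (hy : D.y ∈ S) :
    setPotential k D.graph (D.extension S) = setPotential k G₁ S := by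
  have hlost : D.lostNeighbors (D.extension S) = ∅ :=
    Set.eq_empty_of_forall_notMem fun _ hb => hb.2.2.1 (inl_mem_extension.2 hy)
  have h := setPotential_of_mem (k := k) (W := D.extension S) (inl_mem_extension.2 hx)
  rw [preimage_inl_extension, preimage_lift_extension hx, hlost, Set.ncard_empty, h₂,
    setPotential_deleteEdges_of_mem D.adj hx hy] at h
  linear_combination h

theorem isStandard_extension [Nontrivial (Fin (k - 1))] (h₂ : IsOreLike k G₂)
    (hS : IsStandard k G₁ S) (hx : D.x ∈ S) (hy : D.y ∈ S) :
    IsStandard k D.graph (D.extension S) := by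
  obtain ⟨s, t, hS⟩ := hS
  refine ⟨Sum.inl s, Sum.inl t, ?_, Sum.inl_injective.ne hS.ne, inl_mem_extension.2 hS.left_mem,
    inl_mem_extension.2 hS.right_mem, ?_, ?_,
    isQuasi_extension h₂.isSplittingCritical hS.isQuasi hx hy⟩
  · rw [setPotential_extension h₂.setPotential_univ hx hy, hS.setPotential_eq]
  · have hpre : Sum.inl ⁻¹' (D.extension S \ {Sum.inl s, Sum.inl t}) = S \ {s, t} := by
      ext a
      simp [inl_mem_extension]
    refine connected_induce_of_range_inr_subset h₂.isSplittingCritical ?_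
      (hpre ▸ hS.connected) ?_
    · rintro _ ⟨c, rfl⟩
      exact ⟨inr_mem_extension c, by simp⟩
    · exact (hS.isQuasi.notMem_pair_or_notMem_pair hx hy D.adj).imp
        (fun h => hpre.superset ⟨hx, h⟩) fun h => hpre.superset ⟨hy, h⟩
  · rintro (a | c) ha has hat (b | d) hab
    · exact inl_mem_extension.2 (hS.closed a (inl_mem_extension.1 ha) (fun h => has (h ▸ rfl))
        (fun h => hat (h ▸ rfl)) b (deleteEdges_adj.1 (adj_inl_inl.1 hab)).1)
    · exact inr_mem_extension d
    · obtain ⟨-, rfl⟩ := adj_inl_inr.1 hab.symm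
      obtain h | h := attach_eq_or_eq (D := D) (c : V₂) <;> rw [h, inl_mem_extension]
      exacts [hx, hy]
    · exact inr_mem_extension d

end Extension

section Tame

variable {k : ℕ} {W : Set (V₁ ⊕ {w : V₂ // w ≠ D.z})}

theorem image_preimage_lift (hW : ∀ a, Sum.inl a ∈ W → a = D.x) :
    D.lift D.x '' (D.lift D.x ⁻¹' W) = W := by
  refine Set.image_preimage_eq_iff.2 ?_
  rintro (a | c) hu
  · exact ⟨D.z, by rw [lift_z, hW a hu]⟩
  · exact ⟨c, lift_coe _ c⟩

theorem range_inr_subset_of_preimage_lift_eq_univ (hW : D.lift D.x ⁻¹' W = Set.univ) :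
    Set.range Sum.inr ⊆ W := by
  rintro _ ⟨c, rfl⟩
  rw [← lift_coe D.x c]
  exact hW.superset (Set.mem_univ (c : V₂))

theorem lostNeighbors_of_mem (hy : Sum.inl D.y ∈ W) : D.lostNeighbors W = ∅ :=
  Set.eq_empty_of_forall_notMem fun _ hb => hb.2.2.1 hy

variable [Finite V₁] [Finite V₂] [Nontrivial (Fin (k - 1))]

theorem isTame_of_notMem (h₁ : IsOreLike k G₁) (h₂ : IsOreLike k G₂) (hW : W.Nonempty)
    (hx : Sum.inl D.x ∉ W) (hy : Sum.inl D.y ∉ W) : IsTame k D.graph W := by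
  have hz : D.z ∉ D.lift D.x ⁻¹' W := by rwa [Set.mem_preimage, lift_z]
  have htame₁ hne := h₁.isTame (Sum.inl ⁻¹' W) hne (fun h => hx (h.superset (Set.mem_univ D.x)))
  have htame₂ hne := h₂.isTame (D.lift D.x ⁻¹' W) hne (fun h => hz (h.superset (Set.mem_univ D.z)))
  obtain hW₁ | hW₁ := (Sum.inl ⁻¹' W : Set V₁).eq_empty_or_nonempty
  · have himage := image_preimage_lift (D := D) (W := W) fun a ha => absurd ha (hW₁.subset ·)
    rw [← himage] at hW ⊢
    exact (htame₂ hW.of_image).image fun S hS => embedsOn_lift fun h => absurd (hS h) hz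
  obtain hW₂ | hW₂ := (D.lift D.x ⁻¹' W).eq_empty_or_nonempty
  · have himage : Sum.inl '' (Sum.inl ⁻¹' W : Set V₁) = W := by
      refine Set.image_preimage_eq_iff.2 ?_
      rintro (a | c) hu
      · exact ⟨a, rfl⟩
      · rw [← lift_coe D.x c] at hu
        exact (hW₂.subset hu).elim
    rw [← himage]
    exact (htame₁ hW₁).image fun S hS => embedsOn_inl fun h => hx (hS h.1)
  have hpot := setPotential_of_notMem (k := k) hx hy
  refine .of_lt ?_
  linarith [vertexPotential_pos (three_le_of_nontrivial_fin (k := k)),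
    (htame₁ hW₁).le_setPotential, (htame₂ hW₂).le_setPotential]

theorem isTame_of_preimage_inl_eq_univ (h₁ : IsOreLike k G₁) (h₂ : IsOreLike k G₂)
    (hW : W ≠ Set.univ) (hW₁ : Sum.inl ⁻¹' W = Set.univ) : IsTame k D.graph W := by
  have hmem : ∀ a, Sum.inl a ∈ W := fun a => hW₁.superset (Set.mem_univ a)
  have hlost := lostNeighbors_of_mem (hmem D.y)
  have hpot : setPotential k D.graph W = setPotential k G₂ (D.lift D.x ⁻¹' W) := by
    have h := setPotential_of_mem (k := k) (hmem D.x)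
    rw [hW₁, (h₁.isStandardPair_deleteEdges D.adj).setPotential_eq, hlost, Set.ncard_empty] at h
    linear_combination h
  have htame := h₂.isTame (D.lift D.x ⁻¹' W) ⟨D.z, by rw [Set.mem_preimage, lift_z]; exact hmem _⟩
    fun h => hW <| by
      refine Set.eq_univ_of_forall ?_
      rintro (a | c)
      exacts [hmem a, range_inr_subset_of_preimage_lift_eq_univ h ⟨c, rfl⟩]
  refine ⟨hpot ▸ htame.le_setPotential, fun hle => ?_, fun _ _ => ?_⟩
  · refine connected_induce_of_lostNeighbors_eq_empty (hmem D.x) hlost ?_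
      (htame.connected (hpot ▸ hle))
    rw [hW₁]
    exact h₁.isSplittingCritical.connected_induce_univ_deleteEdges D.x D.y
  · refine ⟨Set.range Sum.inl, ?_, isStandard_range_inl h₁⟩
    rintro _ ⟨a, rfl⟩
    exact hmem a

theorem isTame_of_mem_of_preimage_lift_eq_univ (h₁ : IsOreLike k G₁)
    (h₂ : IsOreLike k G₂) (hx : Sum.inl D.x ∈ W) (hy : Sum.inl D.y ∈ W)
    (hW₁ : Sum.inl ⁻¹' W ≠ Set.univ) (hW₂ : D.lift D.x ⁻¹' W = Set.univ) :
    IsTame k D.graph W := by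
  have hpot : setPotential k D.graph W = setPotential k G₁ (Sum.inl ⁻¹' W) := by
    have h := setPotential_of_mem (k := k) hx
    rw [setPotential_deleteEdges_of_mem D.adj hx hy, hW₂, h₂.setPotential_univ,
      lostNeighbors_of_mem hy, Set.ncard_empty] at h
    linear_combination h
  have htame := h₁.isTame _ ⟨D.x, hx⟩ hW₁
  have hright := range_inr_subset_of_preimage_lift_eq_univ hW₂
  refine ⟨hpot ▸ htame.le_setPotential, fun hle => ?_, fun hle _ => ?_⟩
  · exact connected_induce_of_range_inr_subset h₂.isSplittingCritical hright
      (htame.connected (hpot ▸ hle)) (.inl hx)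
  · obtain ⟨S, hSW, hS⟩ := htame.exists_isStandard (hpot ▸ hle) ⟨D.x, hx, D.y, hy, D.adj.ne⟩
    have hleft : Sum.inl '' S ⊆ W := Set.image_subset_iff.2 hSW
    by_cases hxy : D.x ∈ S ∧ D.y ∈ S
    · exact ⟨_, Set.union_subset hleft hright, isStandard_extension h₂ hS hxy.1 hxy.2⟩
    · exact ⟨_, hleft, hS.image (embedsOn_inl hxy)⟩

theorem isTame_of_notMem_of_preimage_lift_eq_univ (h₁ : IsOreLike k G₁)
    (h₂ : IsOreLike k G₂) (hx : Sum.inl D.x ∈ W) (hy : Sum.inl D.y ∉ W)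
    (hW₂ : D.lift D.x ⁻¹' W = Set.univ) : IsTame k D.graph W := by
  have hk : (1 : ℤ) < k := by
    have := three_le_of_nontrivial_fin (k := k)
    omega
  have hlost : D.lostNeighbors W = G₂.neighborSet D.z \ D.P :=
    Set.Subset.antisymm (fun _ hb => hb.1) fun b hb =>
      ⟨hb, hx, hy, hW₂.superset (Set.mem_univ b)⟩
  have hone : (1 : ℤ) ≤ (G₂.neighborSet D.z \ D.P).ncard := by
    exact_mod_cast (Set.ncard_pos (Set.toFinite _)).2 D.nonempty_compl
  have hpot : setPotential k D.graph W = setPotential k G₁ (Sum.inl ⁻¹' W) +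
      2 * (k - 1) * ((G₂.neighborSet D.z \ D.P).ncard - 1) := by
    have h := setPotential_of_mem (k := k) hx
    rw [setPotential_deleteEdges_of_notMem (W := Sum.inl ⁻¹' W) fun h => hy h.2, hW₂,
      h₂.setPotential_univ, hlost] at h
    linear_combination h
  have htame := h₁.isTame (Sum.inl ⁻¹' W) ⟨D.x, hx⟩ fun h => hy (h.superset (Set.mem_univ D.y))
  have hle₁ : setPotential k G₁ (Sum.inl ⁻¹' W) ≤ setPotential k D.graph W := by
    nlinarith
  have hright := range_inr_subset_of_preimage_lift_eq_univ hW₂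
  refine ⟨htame.le_setPotential.trans hle₁, fun hle => ?_, fun hle _ => ?_⟩
  · exact connected_induce_of_range_inr_subset h₂.isSplittingCritical hright
      (htame.connected (hle₁.trans hle)) (.inl hx)
  have hcard : (G₂.neighborSet D.z \ D.P).ncard = 1 := by
    by_contra hne
    have : (1 : ℤ) < (G₂.neighborSet D.z \ D.P).ncard := by omega
    nlinarith [htame.le_setPotential]
  obtain ⟨r, hr⟩ := Set.ncard_eq_one.1 hcard
  refine ⟨_, ?_, isStandard_range_lift h₂ hr⟩
  rintro _ ⟨w, rfl⟩
  exact hW₂.superset (Set.mem_univ w)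

theorem isTame_of_mem_of_preimage_ne_univ (h₁ : IsOreLike k G₁) (h₂ : IsOreLike k G₂)
    (hx : Sum.inl D.x ∈ W) (hy : Sum.inl D.y ∈ W) (hW₁ : Sum.inl ⁻¹' W ≠ Set.univ)
    (hW₂ : D.lift D.x ⁻¹' W ≠ Set.univ) : IsTame k D.graph W := by
  have hk : (3 : ℤ) ≤ k := by exact_mod_cast three_le_of_nontrivial_fin
  refine .of_lt ?_
  have hpot := setPotential_of_mem (k := k) hx
  rw [setPotential_deleteEdges_of_mem D.adj hx hy, lostNeighbors_of_mem hy, Set.ncard_empty] at hpot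
  have hle₁ := (h₁.isTame _ ⟨D.x, hx⟩ hW₁).le_setPotential
  have hle₂ := (h₂.isTame _ ⟨D.z, by rwa [Set.mem_preimage, lift_z]⟩ hW₂).le_setPotential
  push_cast at hpot
  linarith

theorem isTame_of_notMem_of_preimage_ne_univ (h₁ : IsOreLike k G₁) (h₂ : IsOreLike k G₂)
    (hx : Sum.inl D.x ∈ W) (hy : Sum.inl D.y ∉ W) (hW₂ : D.lift D.x ⁻¹' W ≠ Set.univ) :
    IsTame k D.graph W := by
  have hk : (3 : ℤ) ≤ k := by exact_mod_cast three_le_of_nontrivial_fin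
  have htame₁ := h₁.isTame (Sum.inl ⁻¹' W) ⟨D.x, hx⟩ fun h => hy (h.superset (Set.mem_univ D.y))
  have htame₂ := h₂.isTame _ ⟨D.z, by rwa [Set.mem_preimage, lift_z]⟩ hW₂
  have hle₁ := htame₁.le_setPotential
  have hle₂ := htame₂.le_setPotential
  have hpot := setPotential_of_mem (k := k) hx
  have hxy : ¬(D.x ∈ Sum.inl ⁻¹' W ∧ D.y ∈ Sum.inl ⁻¹' W) := fun h => hy h.2
  rw [setPotential_deleteEdges_of_notMem hxy] at hpot
  have hnonneg : 0 ≤ 2 * (k - 1 : ℤ) * (D.lostNeighbors W).ncard := by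
    apply mul_nonneg <;> linarith [Int.natCast_nonneg (D.lostNeighbors W).ncard]
  rcases lt_or_ge (vertexPotential k) (setPotential k D.graph W) with hlt | hle
  · exact .of_lt hlt
  have hlost : D.lostNeighbors W = ∅ := by
    by_contra! hne
    have : (0 : ℤ) < (D.lostNeighbors W).ncard := by
      exact_mod_cast (Set.ncard_pos (Set.toFinite _)).2 hne
    nlinarith
  refine ⟨by linarith, fun _ => ?_, fun _ hnt => ?_⟩
  · exact connected_induce_of_lostNeighbors_eq_empty hx hlost
      ((induce_deleteEdges_of_notMem (G := G₁) hxy).symm ▸ htame₁.connected (by linarith))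
      (htame₂.connected (by linarith))
  obtain hW₁ | hW₁ := (Sum.inl ⁻¹' W : Set V₁).subsingleton_or_nontrivial
  · have himage := image_preimage_lift (W := W) fun a ha => hW₁ ha hx
    rw [← himage] at hnt
    obtain ⟨S, hSW, hS⟩ := htame₂.exists_isStandard (by linarith) (Set.nontrivial_of_image _ _ hnt)
    refine ⟨_, Set.image_subset_iff.2 hSW, hS.image (embedsOn_lift fun _ => ?_)⟩
    exact Set.disjoint_left.2 fun b hb hbP => hlost.subset ⟨hbP, hx, hy, hSW hb⟩
  · obtain ⟨S, hSW, hS⟩ := htame₁.exists_isStandard (by linarith) hW₁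
    exact ⟨_, Set.image_subset_iff.2 hSW, hS.image (embedsOn_inl fun h => hy (hSW h.2))⟩

theorem isTame_of_inl_mem (h₁ : IsOreLike k G₁) (h₂ : IsOreLike k G₂) (hW : W ≠ Set.univ)
    (hx : Sum.inl D.x ∈ W) : IsTame k D.graph W := by
  by_cases hW₁ : Sum.inl ⁻¹' W = Set.univ
  · exact isTame_of_preimage_inl_eq_univ h₁ h₂ hW hW₁
  by_cases hW₂ : D.lift D.x ⁻¹' W = Set.univ <;> by_cases hy : Sum.inl D.y ∈ W
  · exact isTame_of_mem_of_preimage_lift_eq_univ h₁ h₂ hx hy hW₁ hW₂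
  · exact isTame_of_notMem_of_preimage_lift_eq_univ h₁ h₂ hx hy hW₂
  · exact isTame_of_mem_of_preimage_ne_univ h₁ h₂ hx hy hW₁ hW₂
  · exact isTame_of_notMem_of_preimage_ne_univ h₁ h₂ hx hy hW₂

theorem isOreLike (h₁ : IsOreLike k G₁) (h₂ : IsOreLike k G₂) : IsOreLike k D.graph where
  isSplittingCritical := isSplittingCritical h₁.isSplittingCritical h₂.isSplittingCritical
  setPotential_univ := by
    have h := setPotential_of_mem (k := k) (D := D) (Set.mem_univ (Sum.inl D.x))
    rw [Set.preimage_univ, Set.preimage_univ, lostNeighbors_of_mem (Set.mem_univ _),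
      (h₁.isStandardPair_deleteEdges D.adj).setPotential_eq, h₂.setPotential_univ,
      Set.ncard_empty] at h
    linear_combination h
  isTame W hne hW := by
    by_cases hx : Sum.inl D.x ∈ W
    · exact isTame_of_inl_mem h₁ h₂ hW hx
    by_cases hy : Sum.inl D.y ∈ W
    · rw [← graph_swap]
      exact isTame_of_inl_mem (D := D.swap) h₁ h₂ hW hy
    · exact isTame_of_notMem h₁ h₂ hne hx hy

end Tame

end Composition

section OreGraphs

variable {V : Type*} {k : ℕ} {G : SimpleGraph V} {S : Set V} {x y : V}

theorem isOreLike_of_isOreFin (hk : 4 ≤ k) {n : ℕ} {G : SimpleGraph (Fin n)}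
    (hG : IsOreFin k G) : IsOreLike k G := by
  have : Nontrivial (Fin (k - 1)) := Fin.nontrivial_iff_two_le.2 (by omega)
  induction hG with
  | complete h =>
    obtain ⟨e⟩ := h
    exact (isOreLike_top hk).of_iso e.symm
  | comp _ _ h ih₁ ih₂ =>
    obtain ⟨x, y, z, P, hxy, hP, hPne, hPcne, ⟨e⟩⟩ := h
    let D : Composition _ _ := ⟨x, y, z, P, hxy, hP, hPne, hPcne⟩
    exact (D.isOreLike ih₁ ih₂).of_iso e.symm

theorem isOreLike_of_isKOre (hk : 4 ≤ k) (hG : IsKOre k G) : IsOreLike k G := by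
  obtain ⟨_, _, hH, ⟨e⟩⟩ := hG
  exact (isOreLike_of_isOreFin hk hH).of_iso e.symm

theorem IsQuasi.isQuasiVertex [DecidableEq V] (h : IsQuasi (Fin (k - 1)) G x y S)
    (hx : x ∈ S) (hy : y ∈ S) : IsQuasiVertex k G x y S := by
  obtain ⟨φ, hφ⟩ := h.exists_isProperOn
  refine ⟨hx, hy, ⟨.mk (φ ·) fun {a b} => hφ a.2 b.2⟩, fun C => ?_, fun a b hab => ?_⟩
  · let ψ : V → Fin (k - 1) := Function.extend Subtype.val C φ
    have hψ : ∀ a : S, ψ a = C a := Subtype.val_injective.extend_apply C φ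
    have heq : ψ x = ψ y := h.eq_of_isProperOn ψ fun a ha b hb hab => by
      rw [hψ ⟨a, ha⟩, hψ ⟨b, hb⟩]
      exact C.valid hab
    rwa [hψ ⟨x, hx⟩, hψ ⟨y, hy⟩] at heq
  · obtain ⟨ψ, hψ, hne⟩ := h.exists_ne a a.2 b b.2 hab
    refine ⟨.mk (ψ ·) fun {c d} hcd => hψ c.2 d.2 ?_, hne⟩
    rw [deleteEdges_adj] at hcd ⊢
    exact ⟨hcd.1, fun e => hcd.2 (Sym2.map.injective Subtype.val_injective e)⟩

theorem IsStandardPair.not_connected_induce_compl (h : IsStandardPair k G S x y)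
    (hS : S ≠ Set.univ) : ¬(G.induce ({x, y}ᶜ : Set V)).Connected := by
  intro hconn
  obtain ⟨⟨p, hpS, hp⟩⟩ := h.connected.nonempty
  have hclosed : IsClosedIn G {x, y}ᶜ S := fun a ha haS b _ =>
    h.closed a haS (fun e => ha (.inl e)) (fun e => ha (.inr e)) b
  have hsub : {x, y}ᶜ ⊆ S := subset_of_isClosedIn hconn hclosed ⟨p, hp, hpS⟩
  have hpair : {x, y} ⊆ S := Set.pair_subset h.left_mem h.right_mem
  exact hS (Set.univ_subset_iff.1 (Set.union_compl_self {x, y} ▸ Set.union_subset hpair hsub))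

theorem IsStandard.isStandardSet [Fintype V] [DecidableEq V] [DecidableRel G.Adj] {S : Finset V}
    (h : IsStandard k G S) (hS : S ≠ Finset.univ) : IsStandardSet k G S := by
  obtain ⟨x, y, h⟩ := h
  refine ⟨(potential_eq_setPotential S).trans h.setPotential_eq, x, y, h.ne, h.left_mem,
    h.right_mem, h.not_connected_induce_compl fun e => hS (Finset.coe_eq_univ.1 e), h.connected,
    ?_, h.isQuasi.isQuasiVertex h.left_mem h.right_mem⟩
  rintro a ⟨haS, ha⟩ b hab
  exact .inl (h.closed a haS (fun e => ha (.inl e)) (fun e => ha (.inr e)) b hab)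

end OreGraphs

end KOre

/-- **Lemma.** Let `k ≥ 4`, let `G` be a `k`-Ore graph, and let `W` be a proper subset of
`V(G)` with `|W| ≥ 2` and `ρ_{k,G}(W) ≤ (k+1)(k-2)`. Then `G[W]` is connected and `W` contains
a standard set. -/
theorem kOre_low_potential_contains_standard {V : Type*} [Fintype V] [DecidableEq V] (k : ℕ)
    (hk : 4 ≤ k) (G : SimpleGraph V) [DecidableRel G.Adj] (hG : IsKOre k G)
    (W : Finset V) (hW2 : 2 ≤ W.card) (hWp : W ≠ Finset.univ)
    (hpot : potential k G W ≤ ((k : ℤ) + 1) * ((k : ℤ) - 2)) :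
    (G.induce (W : Set V)).Connected ∧ ∃ S ⊆ W, IsStandardSet k G S := by
  have hnt : (W : Set V).Nontrivial := Finset.one_lt_card_iff_nontrivial.1 hW2
  have htame : KOre.IsTame k G W :=
    (KOre.isOreLike_of_isKOre hk hG).isTame W hnt.nonempty fun e => hWp (Finset.coe_eq_univ.1 e)
  rw [KOre.potential_eq_setPotential] at hpot
  obtain ⟨S, hSW, hS⟩ := htame.exists_isStandard hpot hnt
  lift S to Finset V using S.toFinite
  refine ⟨htame.connected hpot, S, Finset.coe_subset.1 hSW, hS.isStandardSet ?_⟩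
  rintro rfl
  exact hWp (Finset.univ_subset_iff.1 (Finset.coe_subset.1 hSW))
end
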